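/- Let H be a complex Hilbert space with dim H ≥ 3 and let φ : B_s(H) → B_s(H) be a surjective map such that for all A, B, C ∈ B_s(H), A − B ↔_c C if and only if φ(A) − φ(B) ↔_c φ(C). Then there exist a nonzero real scalar c, an operator U on H that is either unitary or antiunitary, and a function g : B_s(H) → ℝ such that φ(A) = c·U A U* + g(A)·I for all A ∈ B_s(H). -/

import Mathlib

noncomputable section

set_option linter.unusedSectionVars false

variable {H : Type*} [NormedAddCommGroup H] [InnerProductSpace ℂ H] [CompleteSpace H]

/-- `A ↔_c B`: the self-adjoint operators `A` and `B` commute. -/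
def CommC (A B : selfAdjoint (H →L[ℂ] H)) : Prop :=
  (A : H →L[ℂ] H) * (B : H →L[ℂ] H) = (B : H →L[ℂ] H) * (A : H →L[ℂ] H)

/-- The self-adjoint operator `v ↦ ⟪x, v⟫ x`. -/
def rankOneSA (x : H) : selfAdjoint (H →L[ℂ] H) :=
  ⟨InnerProductSpace.rankOne ℂ x x, by
    rw [selfAdjoint.mem_iff, ContinuousLinearMap.star_eq_adjoint,
      InnerProductSpace.adjoint_rankOne]⟩

@[simp]
lemma rankOneSA_apply (x v : H) :
    (rankOneSA x : H →L[ℂ] H) v = inner ℂ x v • x := rfl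

lemma rankOneSA_smul (a : ℂ) (x : H) :
    (rankOneSA (a • x) : H →L[ℂ] H) = ((‖a‖ ^ 2 : ℝ) : ℂ) • (rankOneSA x : H →L[ℂ] H) := by
  ext v
  have h : (starRingEnd ℂ) a * a = ((‖a‖ ^ 2 : ℝ) : ℂ) := by
    rw [Complex.conj_mul']; push_cast; rfl
  simp only [rankOneSA_apply, inner_smul_left, smul_apply, smul_smul]
  rw [← h]
  congr 1; ring

lemma rankOneSA_smul_of_norm_eq_one {a : ℂ} (ha : ‖a‖ = 1) (x : H) :
    rankOneSA (a • x) = rankOneSA x := by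
  ext1
  rw [rankOneSA_smul, ha]; simp

/-- The parallelogram identity for rank-one operators. -/
lemma rankOneSA_add_add_sub (x z : H) :
    rankOneSA (x + z) + rankOneSA (x - z)
      = rankOneSA x + rankOneSA x + rankOneSA z + rankOneSA z := by
  ext v
  simp only [AddSubgroup.coe_add, add_apply, rankOneSA_apply, inner_add_left,
    inner_sub_left]
  module

lemma commC_iff {A B : selfAdjoint (H →L[ℂ] H)} :
    CommC A B ↔ ∀ v, (A : H →L[ℂ] H) ((B : H →L[ℂ] H) v) = (B : H →L[ℂ] H) ((A : H →L[ℂ] H) v) :=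
  ContinuousLinearMap.ext_iff

lemma CommC.symm {A B : selfAdjoint (H →L[ℂ] H)} (h : CommC A B) : CommC B A := Eq.symm h

lemma commC_comm {A B : selfAdjoint (H →L[ℂ] H)} : CommC A B ↔ CommC B A := ⟨.symm, .symm⟩

lemma selfAdjoint_inner (A : selfAdjoint (H →L[ℂ] H)) (x y : H) :
    inner ℂ ((A : H →L[ℂ] H) x) y = inner ℂ x ((A : H →L[ℂ] H) y) := by
  have h : ContinuousLinearMap.adjoint (A : H →L[ℂ] H) = A := A.2
  conv_lhs => rw [← h]
  exact ContinuousLinearMap.adjoint_inner_left _ _ _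

lemma inner_self_ne_zero_complex {x : H} (hx : x ≠ 0) : inner ℂ x x ≠ 0 :=
  inner_self_ne_zero.2 hx

lemma inner_self_eq_ofReal (x : H) : inner ℂ x x = ((‖x‖ ^ 2 : ℝ) : ℂ) := by
  rw [inner_self_eq_norm_sq_to_K]; push_cast; rfl

lemma selfAdjoint_inner_self_real (A : selfAdjoint (H →L[ℂ] H)) (x : H) :
    ((inner ℂ x ((A : H →L[ℂ] H) x)).re : ℂ) = inner ℂ x ((A : H →L[ℂ] H) x) := by
  rw [← Complex.conj_eq_iff_re, inner_conj_symm, selfAdjoint_inner]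

/-- A self-adjoint operator commutes with a rank-one operator exactly when the direction of the
latter is an eigenvector of the former. -/
lemma commC_rankOneSA_iff {A : selfAdjoint (H →L[ℂ] H)} {x : H} (hx : x ≠ 0) :
    CommC A (rankOneSA x) ↔ ∃ l : ℝ, (A : H →L[ℂ] H) x = (l : ℂ) • x := by
  constructor
  · intro h
    have h1 := commC_iff.1 h x
    simp only [rankOneSA_apply, map_smul] at h1
    refine ⟨(inner ℂ x ((A : H →L[ℂ] H) x)).re / ‖x‖ ^ 2, ?_⟩
    push_cast
    have h2 := inner_self_ne_zero_complex hx
    have h3 := inner_self_eq_ofReal x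
    push_cast at h3
    rw [selfAdjoint_inner_self_real, ← h3, div_eq_inv_mul, mul_smul, ← h1, smul_smul,
      inv_mul_cancel₀ h2, one_smul]
  · rintro ⟨l, hl⟩
    rw [commC_iff]
    intro v
    simp only [rankOneSA_apply, map_smul, hl]
    rw [← selfAdjoint_inner, hl, inner_smul_left, Complex.conj_ofReal, smul_smul, mul_comm]

lemma commC_rankOneSA_of_apply_eq_smul {A : selfAdjoint (H →L[ℂ] H)} {x : H} {l : ℝ}
    (h : (A : H →L[ℂ] H) x = (l : ℂ) • x) : CommC A (rankOneSA x) := by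
  by_cases hx : x = 0
  · subst hx
    rw [commC_iff]; intro v; simp
  · exact (commC_rankOneSA_iff hx).2 ⟨l, h⟩

/-- A linear map all of whose nonzero vectors in `E` are eigenvectors is a scalar on `E`. -/
lemma exists_smul_of_forall_eigenvector {f : H → H} (hadd : ∀ x y, f (x + y) = f x + f y)
    (hsmul : ∀ (a : ℂ) x, f (a • x) = a • f x) (E : Submodule ℂ H)
    (h : ∀ w ∈ E, ∃ l : ℝ, f w = (l : ℂ) • w) :
    ∃ μ : ℝ, ∀ w ∈ E, f w = (μ : ℂ) • w := by
  by_cases hE : ∃ z ∈ E, z ≠ 0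
  · obtain ⟨z, hz, hz0⟩ := hE
    obtain ⟨μ, hμ⟩ := h z hz
    refine ⟨μ, fun w hw => ?_⟩
    by_cases hw' : ∃ a : ℂ, w = a • z
    · obtain ⟨a, rfl⟩ := hw'
      rw [hsmul, hμ, smul_comm]
    · obtain ⟨l, hl⟩ := h w hw
      obtain ⟨k, hk⟩ := h (z + w) (E.add_mem hz hw)
      rw [hadd, hμ, hl] at hk
      have h1 : ((l : ℂ) - k) • w = ((k : ℂ) - μ) • z := by
        linear_combination (norm := module) hk
      have hlk : (l : ℂ) - k = 0 := by
        by_contra hne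
        refine hw' ⟨((l : ℂ) - k)⁻¹ * ((k : ℂ) - μ), ?_⟩
        rw [mul_smul, ← h1, smul_smul, inv_mul_cancel₀ hne, one_smul]
      rw [hlk, zero_smul] at h1
      have hkμ : (k : ℂ) - μ = 0 := by
        rcases smul_eq_zero.1 h1.symm with h2 | h2
        · exact h2
        · exact absurd h2 hz0
      rw [hl]
      congr 1
      linear_combination hlk + hkμ
  · push Not at hE
    exact ⟨0, fun w hw => by
      have := hsmul 0 0
      rw [hE w hw]; simpa using this⟩

lemma selfAdjoint_exists_smul_of_forall_eigenvector (A : selfAdjoint (H →L[ℂ] H))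
    (E : Submodule ℂ H) (h : ∀ w ∈ E, CommC A (rankOneSA w)) :
    ∃ μ : ℝ, ∀ w ∈ E, (A : H →L[ℂ] H) w = (μ : ℂ) • w := by
  refine exists_smul_of_forall_eigenvector (map_add _) (map_smul _) E fun w hw => ?_
  by_cases hw0 : w = 0
  · exact ⟨0, by simp [hw0]⟩
  · exact (commC_rankOneSA_iff hw0).1 (h w hw)

/-- In dimension at least three any two vectors have a common nonzero orthogonal vector. -/
lemma exists_orthogonal_of_three_le_rank (hdim : 3 ≤ Module.rank ℂ H) (x z : H) :
    ∃ u : H, u ≠ 0 ∧ inner ℂ x u = 0 ∧ inner ℂ z u = 0 := by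
  have hfin : (Submodule.span ℂ ({x, z} : Set H)) ≠ ⊤ := by
    intro h
    have h1 := rank_span_le (R := ℂ) ({x, z} : Set H)
    rw [h, rank_top] at h1
    have h2 : Cardinal.mk ({x, z} : Set H) ≤ 2 := by
      refine (Cardinal.mk_insert_le).trans ?_
      rw [Cardinal.mk_singleton]; norm_num
    have h3 := hdim.trans (h1.trans h2)
    norm_num at h3
  have : FiniteDimensional ℂ (Submodule.span ℂ ({x, z} : Set H)) :=
    FiniteDimensional.span_of_finite ℂ (Set.toFinite _)
  have h1 : (Submodule.span ℂ ({x, z} : Set H))ᗮ ≠ ⊥ := fun h =>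
    hfin (Submodule.orthogonal_eq_bot_iff.1 h)
  obtain ⟨u, hu, hu0⟩ := Submodule.exists_mem_ne_zero_of_ne_bot h1
  rw [Submodule.mem_orthogonal] at hu
  exact ⟨u, hu0, hu x (Submodule.subset_span (by simp)), hu z (Submodule.subset_span (by simp))⟩

/-- `A` commutes with every self-adjoint operator. -/
def CentralC (A : selfAdjoint (H →L[ℂ] H)) : Prop := ∀ C, CommC A C

/-- `D` belongs to the bicommutant of `A`. -/
def BicommC (A D : selfAdjoint (H →L[ℂ] H)) : Prop := ∀ C, CommC A C → CommC D C

/-- `A` is not central and its commutant is maximal among those of noncentral operators. -/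
def MaxCommC (A : selfAdjoint (H →L[ℂ] H)) : Prop :=
  ¬ CentralC A ∧ ∀ D, BicommC A D → ¬ CentralC D → BicommC D A

/-- A property, phrased through commutativity only, that singles out the operators whose
commutant is that of a rank-one projection. -/
def RankOneTypeC (A : selfAdjoint (H →L[ℂ] H)) : Prop :=
  MaxCommC A ∧ ∀ B, CommC A B → MaxCommC B → ¬ BicommC A B →
    ∀ D, (∀ C, CommC A C → CommC B C → CommC D C) → ¬ BicommC A D →
      ∀ C, CommC A C → CommC D C → CommC B C

/-- Real functions of a self-adjoint operator. -/
def cfcSA (f : ℝ → ℝ) (A : selfAdjoint (H →L[ℂ] H)) : selfAdjoint (H →L[ℂ] H) :=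
  ⟨cfc f (A : H →L[ℂ] H), cfc_predicate f _⟩

lemma CommC.cfcSA {A C : selfAdjoint (H →L[ℂ] H)} (h : CommC A C) (f : ℝ → ℝ) :
    CommC (cfcSA f A) C :=
  Commute.cfc_real (show Commute (A : H →L[ℂ] H) C from h) f

lemma cfcSA_mul_eq_zero (A : selfAdjoint (H →L[ℂ] H)) {f g : ℝ → ℝ} (hf : Continuous f)
    (hg : Continuous g) (h : ∀ x, f x * g x = 0) (v : H) :
    (cfcSA f A : H →L[ℂ] H) ((cfcSA g A : H →L[ℂ] H) v) = 0 := by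
  have h1 := cfc_mul (R := ℝ) f g (A : H →L[ℂ] H) hf.continuousOn hg.continuousOn
  have h2 : (fun x => f x * g x) = fun _ => 0 := funext h
  rw [h2, cfc_const_zero] at h1
  exact (congrArg (fun T : H →L[ℂ] H => T v) h1).symm

lemma exists_cfcSA_apply_ne_zero (A : selfAdjoint (H →L[ℂ] H)) {f : ℝ → ℝ} (hf : Continuous f)
    {x : ℝ} (hx : x ∈ spectrum ℝ (A : H →L[ℂ] H)) (hfx : f x ≠ 0) :
    ∃ v, (cfcSA f A : H →L[ℂ] H) v ≠ 0 := by
  by_contra! h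
  have h1 : cfc f (A : H →L[ℂ] H) = cfc (fun _ : ℝ => (0 : ℝ)) (A : H →L[ℂ] H) := by
    rw [cfc_const_zero]; ext v; exact h v
  exact hfx (eqOn_of_cfc_eq_cfc h1 hf.continuousOn continuousOn_const A.2 hx)

lemma selfAdjoint_apply_apply_ne_zero (A : selfAdjoint (H →L[ℂ] H)) {v : H}
    (h : (A : H →L[ℂ] H) v ≠ 0) : (A : H →L[ℂ] H) ((A : H →L[ℂ] H) v) ≠ 0 := by
  intro h1
  apply h
  rw [← inner_self_eq_zero (𝕜 := ℂ), selfAdjoint_inner, h1, inner_zero_right]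

/-- An operator whose commutant is maximal has no three distinct points in its spectrum. -/
lemma MaxCommC.not_lt_lt {A : selfAdjoint (H →L[ℂ] H)} (hA : MaxCommC A) {a b c : ℝ}
    (ha : a ∈ spectrum ℝ (A : H →L[ℂ] H)) (hb : b ∈ spectrum ℝ (A : H →L[ℂ] H))
    (hc : c ∈ spectrum ℝ (A : H →L[ℂ] H)) (hab : a < b) (hbc : b < c) : False := by
  set f : ℝ → ℝ := fun x => max ((a + b) / 2 - x) 0 with hf
  set h₁ : ℝ → ℝ := fun x => max (min (x - (a + b) / 2) ((b + c) / 2 - x)) 0 with hh₁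
  set h₂ : ℝ → ℝ := fun x => max (x - (b + c) / 2) 0 with hh₂
  have cf : Continuous f := by fun_prop
  have c₁ : Continuous h₁ := by fun_prop
  have c₂ : Continuous h₂ := by fun_prop
  have f1 : ∀ x, f x * h₁ x = 0 := fun x => by
    rcases le_total x ((a + b) / 2) with h | h
    · rw [hh₁]; simp only
      rw [max_eq_right ((min_le_left _ _).trans (by linarith)), mul_zero]
    · rw [hf]; simp only
      rw [max_eq_right (by linarith), zero_mul]
  have f2 : ∀ x, f x * h₂ x = 0 := fun x => by
    rcases le_total x ((a + b) / 2) with h | h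
    · rw [hh₂]; simp only
      rw [max_eq_right (by linarith), mul_zero]
    · rw [hf]; simp only
      rw [max_eq_right (by linarith), zero_mul]
  have f3 : ∀ x, h₂ x * h₁ x = 0 := fun x => by
    rcases le_total x ((b + c) / 2) with h | h
    · rw [hh₂]; simp only
      rw [max_eq_right (by linarith), zero_mul]
    · rw [hh₁]; simp only
      rw [max_eq_right ((min_le_right _ _).trans (by linarith)), mul_zero]
  have n1 : h₁ b ≠ 0 := by
    have : 0 < h₁ b := lt_max_of_lt_left (lt_min (by linarith) (by linarith))
    exact this.ne'
  have n2 : h₂ c ≠ 0 := by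
    have : 0 < h₂ c := lt_max_of_lt_left (by linarith)
    exact this.ne'
  have n3 : f a ≠ 0 := by
    have : 0 < f a := lt_max_of_lt_left (by linarith)
    exact this.ne'
  obtain ⟨v, hv⟩ := exists_cfcSA_apply_ne_zero A c₁ hb n1
  obtain ⟨w, hw⟩ := exists_cfcSA_apply_ne_zero A c₂ hc n2
  obtain ⟨u, hu⟩ := exists_cfcSA_apply_ne_zero A cf ha n3
  have hv2 := selfAdjoint_apply_apply_ne_zero _ hv
  have hw2 := selfAdjoint_apply_apply_ne_zero _ hw
  set p := (cfcSA h₁ A : H →L[ℂ] H) v with hp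
  set q := (cfcSA h₂ A : H →L[ℂ] H) w with hq
  have key := hA.2 (cfcSA f A) (fun C hC => hC.cfcSA f) (fun hcen => by
    obtain ⟨μ, hμ⟩ := selfAdjoint_exists_smul_of_forall_eigenvector (cfcSA f A) ⊤
      (fun w _ => hcen _)
    have h1 := hμ p trivial
    rw [hp, cfcSA_mul_eq_zero A cf c₁ f1] at h1
    rcases smul_eq_zero.1 h1.symm with h2 | h2
    · exact hu (by rw [hμ u trivial, h2, zero_smul])
    · exact hv h2)
  have hpq : CommC (cfcSA f A) (rankOneSA (p + q)) :=
    commC_rankOneSA_of_apply_eq_smul (l := 0) (by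
      rw [map_add, hp, hq, cfcSA_mul_eq_zero A cf c₁ f1, cfcSA_mul_eq_zero A cf c₂ f2]; simp)
  have h4 : CommC (cfcSA h₁ A) (rankOneSA (p + q)) := (key _ hpq).cfcSA h₁
  have hpq0 : p + q ≠ 0 := by
    intro h0
    have := congrArg (cfcSA h₂ A : H →L[ℂ] H) h0
    rw [map_add, map_zero, hp, cfcSA_mul_eq_zero A c₂ c₁ f3, zero_add] at this
    exact hw2 this
  obtain ⟨l, hl⟩ := (commC_rankOneSA_iff hpq0).1 h4
  rw [map_add, hq, cfcSA_mul_eq_zero A c₁ c₂ (fun x => by rw [mul_comm]; exact f3 x), add_zero]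
    at hl
  have h5 := congrArg (cfcSA h₂ A : H →L[ℂ] H) hl
  rw [cfcSA_mul_eq_zero A c₂ c₁ f3, map_smul, map_add, hp, cfcSA_mul_eq_zero A c₂ c₁ f3,
    zero_add] at h5
  rcases smul_eq_zero.1 h5.symm with h6 | h6
  · rw [h6, zero_smul] at hl
    exact hv2 hl
  · exact hw2 h6

/-- An operator whose commutant is maximal is an affine function of a projection. -/
lemma MaxCommC.exists_projection {A : selfAdjoint (H →L[ℂ] H)} (hA : MaxCommC A) :
    ∃ (Q : selfAdjoint (H →L[ℂ] H)) (s r : ℝ), s ≠ 0 ∧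
      (∀ v, (Q : H →L[ℂ] H) ((Q : H →L[ℂ] H) v) = (Q : H →L[ℂ] H) v) ∧
      ∀ v, (A : H →L[ℂ] H) v = (s : ℂ) • (Q : H →L[ℂ] H) v + (r : ℂ) • v := by
  have hnt : Nontrivial (H →L[ℂ] H) := by
    by_contra h
    rw [not_nontrivial_iff_subsingleton] at h
    exact hA.1 fun C => Subsingleton.elim _ _
  have hne := ContinuousFunctionalCalculus.spectrum_nonempty (R := ℝ) (A : H →L[ℂ] H) A.2
  have hco : IsCompact (spectrum ℝ (A : H →L[ℂ] H)) :=
    ContinuousFunctionalCalculus.isCompact_spectrum (R := ℝ) (p := IsSelfAdjoint) _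
  obtain ⟨a, ha, hamin⟩ := hco.exists_isMinOn hne continuousOn_id
  obtain ⟨c, hc, hcmax⟩ := hco.exists_isMaxOn hne continuousOn_id
  have hσ : ∀ b ∈ spectrum ℝ (A : H →L[ℂ] H), b = a ∨ b = c := by
    intro b hb
    by_contra! h
    exact hA.not_lt_lt ha hb hc (lt_of_le_of_ne (hamin hb) h.1.symm)
      (lt_of_le_of_ne (hcmax hb) h.2)
  have hac : c - a ≠ 0 := by
    intro hac
    have h1 : (A : H →L[ℂ] H) = algebraMap ℝ _ a := by
      have hsa : IsSelfAdjoint (A : H →L[ℂ] H) := A.2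
      rw [← cfc_const a (A : H →L[ℂ] H) hsa]
      conv_lhs => rw [← cfc_id' ℝ (A : H →L[ℂ] H) hsa]
      refine cfc_congr fun b hb => ?_
      rcases hσ b hb with h | h
      · exact h
      · rw [h]; linarith
    refine hA.1 fun C => ?_
    unfold CommC
    rw [h1]
    exact Algebra.commutes _ _
  have cf : Continuous fun x : ℝ => (x - a) / (c - a) := by fun_prop
  refine ⟨cfcSA (fun x => (x - a) / (c - a)) A, c - a, a, hac, fun v => ?_, fun v => ?_⟩
  · have h1 := cfc_mul (R := ℝ) _ _ (A : H →L[ℂ] H) cf.continuousOn cf.continuousOn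
    have h2 : cfc (fun x : ℝ => (x - a) / (c - a) * ((x - a) / (c - a))) (A : H →L[ℂ] H)
        = cfc (fun x : ℝ => (x - a) / (c - a)) (A : H →L[ℂ] H) := by
      refine cfc_congr fun b hb => ?_
      rcases hσ b hb with h | h
      · simp [h]
      · simp [h, div_self hac]
    rw [h2] at h1
    exact (congrArg (fun T : H →L[ℂ] H => T v) h1).symm
  · have hsa : IsSelfAdjoint (A : H →L[ℂ] H) := A.2
    have h1 : cfc (fun x : ℝ => (c - a) * ((x - a) / (c - a)) + a) (A : H →L[ℂ] H)
        = (A : H →L[ℂ] H) := by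
      conv_rhs => rw [← cfc_id' ℝ (A : H →L[ℂ] H) hsa]
      refine cfc_congr fun b hb => ?_
      field_simp
      ring
    have h2 := cfc_add (R := ℝ) (A : H →L[ℂ] H) (fun x : ℝ => (c - a) * ((x - a) / (c - a)))
      (fun _ => a) (by fun_prop) (by fun_prop)
    have h3 := cfc_const_mul (R := ℝ) (c - a) (fun x : ℝ => (x - a) / (c - a))
      (A : H →L[ℂ] H) cf.continuousOn
    have h4 := cfc_const (R := ℝ) a (A : H →L[ℂ] H) hsa
    rw [h3, h4, h1] at h2
    rw [Complex.coe_smul, Complex.coe_smul]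
    have h5 := congrArg (fun T : H →L[ℂ] H => T v) h2
    rw [Algebra.algebraMap_eq_smul_one] at h5
    exact h5

/-- The operators in the bicommutant of two orthogonal projections. -/
lemma exists_combination_of_bicommutant {P Q D : selfAdjoint (H →L[ℂ] H)}
    (hP : ∀ v, (P : H →L[ℂ] H) ((P : H →L[ℂ] H) v) = (P : H →L[ℂ] H) v)
    (hQ : ∀ v, (Q : H →L[ℂ] H) ((Q : H →L[ℂ] H) v) = (Q : H →L[ℂ] H) v)
    (hPQ : ∀ v, (P : H →L[ℂ] H) ((Q : H →L[ℂ] H) v) = 0)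
    (hQP : ∀ v, (Q : H →L[ℂ] H) ((P : H →L[ℂ] H) v) = 0)
    (hD : ∀ C, CommC P C → CommC Q C → CommC D C) :
    ∃ a b c : ℝ, ∀ v, (D : H →L[ℂ] H) v
      = (a : ℂ) • (P : H →L[ℂ] H) v + (b : ℂ) • (Q : H →L[ℂ] H) v + (c : ℂ) • v := by
  have key : ∀ s t : ℝ, ∃ μ : ℝ, ∀ w, (P : H →L[ℂ] H) w = (s : ℂ) • w →
      (Q : H →L[ℂ] H) w = (t : ℂ) • w → (D : H →L[ℂ] H) w = (μ : ℂ) • w := by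
    intro s t
    obtain ⟨μ, hμ⟩ := selfAdjoint_exists_smul_of_forall_eigenvector D
      (LinearMap.ker (((P : H →L[ℂ] H) - (s : ℂ) • 1 : H →L[ℂ] H) : H →ₗ[ℂ] H) ⊓
        LinearMap.ker (((Q : H →L[ℂ] H) - (t : ℂ) • 1 : H →L[ℂ] H) : H →ₗ[ℂ] H))
      (fun w hw => by
        have h1 : (P : H →L[ℂ] H) w - (s : ℂ) • w = 0 := hw.1
        have h2 : (Q : H →L[ℂ] H) w - (t : ℂ) • w = 0 := hw.2
        exact hD _ (commC_rankOneSA_of_apply_eq_smul (sub_eq_zero.1 h1))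
          (commC_rankOneSA_of_apply_eq_smul (sub_eq_zero.1 h2)))
    exact ⟨μ, fun w h1 h2 => hμ w ⟨sub_eq_zero.2 h1, sub_eq_zero.2 h2⟩⟩
  obtain ⟨μ₁, h₁⟩ := key 1 0
  obtain ⟨μ₂, h₂⟩ := key 0 1
  obtain ⟨μ₃, h₃⟩ := key 0 0
  refine ⟨μ₁ - μ₃, μ₂ - μ₃, μ₃, fun v => ?_⟩
  have e₁ := h₁ ((P : H →L[ℂ] H) v) (by simp [hP]) (by simp [hQP])
  have e₂ := h₂ ((Q : H →L[ℂ] H) v) (by simp [hPQ]) (by simp [hQ])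
  have e₃ := h₃ (v - (P : H →L[ℂ] H) v - (Q : H →L[ℂ] H) v) (by simp [hP, hPQ])
    (by simp [hQ, hQP])
  rw [map_sub, map_sub, e₁, e₂] at e₃
  push_cast
  linear_combination (norm := module) e₃

lemma commC_iff_of_affine {A Q : selfAdjoint (H →L[ℂ] H)} {s r : ℝ} (hs : s ≠ 0)
    (h : ∀ v, (A : H →L[ℂ] H) v = (s : ℂ) • (Q : H →L[ℂ] H) v + (r : ℂ) • v)
    (C : selfAdjoint (H →L[ℂ] H)) : CommC A C ↔ CommC Q C := by
  rw [commC_iff, commC_iff]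
  refine forall_congr' fun v => ?_
  rw [h, h, map_add, map_smul, map_smul, add_left_inj]
  exact (smul_right_injective H (Complex.ofReal_ne_zero.2 hs)).eq_iff

lemma exists_affine_of_bicommC {Q D : selfAdjoint (H →L[ℂ] H)}
    (hQ : ∀ v, (Q : H →L[ℂ] H) ((Q : H →L[ℂ] H) v) = (Q : H →L[ℂ] H) v) (hD : BicommC Q D) :
    ∃ a c : ℝ, ∀ v, (D : H →L[ℂ] H) v = (a : ℂ) • (Q : H →L[ℂ] H) v + (c : ℂ) • v := by
  obtain ⟨a, b, c, h⟩ := exists_combination_of_bicommutant (P := Q) (Q := 0) (D := D) hQ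
    (by simp) (by simp) (by simp) (fun C h _ => hD C h)
  exact ⟨a, c, fun v => by rw [h v]; simp⟩

lemma maxCommC_of_projection {Q : selfAdjoint (H →L[ℂ] H)}
    (hQ : ∀ v, (Q : H →L[ℂ] H) ((Q : H →L[ℂ] H) v) = (Q : H →L[ℂ] H) v) (h : ¬ CentralC Q) :
    MaxCommC Q := by
  refine ⟨h, fun D hD hDc C => ?_⟩
  obtain ⟨a, c, hac⟩ := exists_affine_of_bicommC hQ hD
  have ha : a ≠ 0 := by
    rintro rfl
    refine hDc fun C => commC_iff.2 fun v => ?_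
    simp [hac]
  exact (commC_iff_of_affine ha hac C).1

lemma maxCommC_congr {A B : selfAdjoint (H →L[ℂ] H)} (h : ∀ C, CommC A C ↔ CommC B C) :
    MaxCommC A ↔ MaxCommC B := by
  simp only [MaxCommC, CentralC, BicommC, h]

lemma rankOneTypeC_congr {A B : selfAdjoint (H →L[ℂ] H)} (h : ∀ C, CommC A C ↔ CommC B C) :
    RankOneTypeC A ↔ RankOneTypeC B := by
  simp only [RankOneTypeC, maxCommC_congr h, BicommC, h]

lemma rankOneTypeC_map_iff {φ : selfAdjoint (H →L[ℂ] H) → selfAdjoint (H →L[ℂ] H)}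
    (hφ : Function.Surjective φ) (h : ∀ A B, CommC (φ A) (φ B) ↔ CommC A B)
    (A : selfAdjoint (H →L[ℂ] H)) : RankOneTypeC (φ A) ↔ RankOneTypeC A := by
  have hcen : ∀ A, CentralC (φ A) ↔ CentralC A := fun A =>
    hφ.forall.trans (forall_congr' fun C => h A C)
  have hbi : ∀ A D, BicommC (φ A) (φ D) ↔ BicommC A D := fun A D =>
    hφ.forall.trans (forall_congr' fun C => imp_congr (h A C) (h D C))
  have hmax : ∀ A, MaxCommC (φ A) ↔ MaxCommC A := fun A =>
    and_congr (not_congr (hcen A)) (hφ.forall.trans (forall_congr' fun D =>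
      imp_congr (hbi A D) (imp_congr (not_congr (hcen D)) (hbi D A))))
  refine and_congr (hmax A) (hφ.forall.trans (forall_congr' fun B => imp_congr (h A B)
    (imp_congr (hmax B) (imp_congr (not_congr (hbi A B)) (hφ.forall.trans (forall_congr' fun D =>
      imp_congr (hφ.forall.trans (forall_congr' fun C => ?_)) (imp_congr (not_congr (hbi A D))
        (hφ.forall.trans (forall_congr' fun C => ?_)))))))))
  · exact imp_congr (h A C) (imp_congr (h B C) (h D C))
  · exact imp_congr (h A C) (imp_congr (h D C) (h B C))

lemma rankOneSA_isIdempotent {x : H} (hx : ‖x‖ = 1) (v : H) :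
    (rankOneSA x : H →L[ℂ] H) ((rankOneSA x : H →L[ℂ] H) v) = (rankOneSA x : H →L[ℂ] H) v := by
  simp [hx]

/-- Vectors that are not proportional are separated by commutation. -/
lemma not_commC_rankOneSA_add {A : selfAdjoint (H →L[ℂ] H)} {x z : H} {s t : ℝ} (hst : s ≠ t)
    (hx : (A : H →L[ℂ] H) x = (s : ℂ) • x) (hz : (A : H →L[ℂ] H) z = (t : ℂ) • z)
    (hx0 : x ≠ 0) (hz0 : z ≠ 0) : ¬ CommC A (rankOneSA (x + z)) := by
  have hxz : inner ℂ x z = 0 := by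
    have h := selfAdjoint_inner A x z
    rw [hx, hz, inner_smul_left, inner_smul_right, Complex.conj_ofReal] at h
    have h1 : ((s : ℂ) - t) * inner ℂ x z = 0 := by linear_combination h
    rcases mul_eq_zero.1 h1 with h2 | h2
    · exact absurd (by exact_mod_cast sub_eq_zero.1 h2) hst
    · exact h2
  have hzx : inner ℂ z x = 0 := inner_eq_zero_symm.1 hxz
  have hne : x + z ≠ 0 := fun h => by
    have h1 := congrArg (inner ℂ x) h
    rw [inner_add_right, hxz, add_zero, inner_zero_right] at h1
    exact hx0 (inner_self_eq_zero.1 h1)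
  rw [commC_rankOneSA_iff hne]
  rintro ⟨l, hl⟩
  rw [map_add, hx, hz] at hl
  have h1 := congrArg (inner ℂ x) hl
  have h2 := congrArg (inner ℂ z) hl
  simp only [inner_add_right, inner_smul_right, hxz, hzx, mul_zero, add_zero, zero_add] at h1 h2
  have h3 := mul_right_cancel₀ (inner_self_ne_zero_complex hx0) h1
  have h4 := mul_right_cancel₀ (inner_self_ne_zero_complex hz0) h2
  exact hst (by exact_mod_cast h3.trans h4.symm)

lemma rankOneTypeC_rankOneSA_of_norm_eq_one {x u : H} (hx : ‖x‖ = 1) (hu : u ≠ 0)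
    (hxu : inner ℂ x u = 0) : RankOneTypeC (rankOneSA x) := by
  have hx0 : x ≠ 0 := fun h => by simp [h] at hx
  have hxx : (rankOneSA x : H →L[ℂ] H) x = ((1 : ℝ) : ℂ) • x := by
    simp [hx]
  have hxu' : (rankOneSA x : H →L[ℂ] H) u = ((0 : ℝ) : ℂ) • u := by simp [hxu]
  have hmax : MaxCommC (rankOneSA x) :=
    maxCommC_of_projection (rankOneSA_isIdempotent hx) fun h =>
      not_commC_rankOneSA_add one_ne_zero hxx hxu' hx0 hu (h _)
  refine ⟨hmax, fun B hAB hB hnB D hD hnD C hC hDC => ?_⟩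
  -- replace `B` by a projection annihilating `x`
  obtain ⟨Q, s, r, hs, hQ, hBQ⟩ := hB.exists_projection
  obtain ⟨Q', s', r', hs', hQ', hBQ', hQx⟩ : ∃ (Q' : selfAdjoint (H →L[ℂ] H)) (s' r' : ℝ),
      s' ≠ 0 ∧ (∀ v, (Q' : H →L[ℂ] H) ((Q' : H →L[ℂ] H) v) = (Q' : H →L[ℂ] H) v) ∧
      (∀ v, (B : H →L[ℂ] H) v = (s' : ℂ) • (Q' : H →L[ℂ] H) v + (r' : ℂ) • v) ∧
      (Q' : H →L[ℂ] H) x = 0 := by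
    have h1 : CommC Q (rankOneSA x) := (commC_iff_of_affine hs hBQ _).1 hAB.symm
    obtain ⟨q, hq⟩ := (commC_rankOneSA_iff hx0).1 h1
    have h2 := hQ x
    rw [hq, map_smul, hq, smul_smul] at h2
    have h3 : (q : ℂ) * q = q := smul_left_injective ℂ hx0 h2
    have h4 : (q : ℂ) * (q - 1) = 0 := by linear_combination h3
    rcases mul_eq_zero.1 h4 with h5 | h5
    · exact ⟨Q, s, r, hs, hQ, hBQ, by rw [hq, h5, zero_smul]⟩
    · refine ⟨1 - Q, -s, s + r, neg_ne_zero.2 hs, fun v => ?_, fun v => ?_, ?_⟩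
      · simp [hQ]
      · rw [hBQ]
        simp only [AddSubgroup.coe_sub, selfAdjoint.val_one, sub_apply,
          one_apply_eq_self]
        push_cast
        module
      · simp only [AddSubgroup.coe_sub, selfAdjoint.val_one, sub_apply,
          one_apply_eq_self, hq]
        rw [sub_eq_zero.1 h5]; simp
  have hB' := commC_iff_of_affine hs' hBQ'
  obtain ⟨a, b, c, hDv⟩ := exists_combination_of_bicommutant (rankOneSA_isIdempotent hx) hQ'
    (fun v => by simp [← selfAdjoint_inner, hQx]) (fun v => by simp [hQx])
    (fun C h1 h2 => hD C h1 ((hB' C).2 h2))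
  have hb : b ≠ 0 := by
    rintro rfl
    refine hnD fun C hC => commC_iff.2 fun v => ?_
    have := commC_iff.1 hC v
    rw [hDv, hDv, map_add, map_add, map_smul, map_smul, map_smul, this]
    simp
  rw [hB', commC_iff]
  intro v
  have h1 := commC_iff.1 hC v
  have h2 := commC_iff.1 hDC v
  rw [hDv, hDv, map_add, map_add, map_smul, map_smul, map_smul, h1] at h2
  refine smul_right_injective H (Complex.ofReal_ne_zero.2 hb) ?_
  linear_combination (norm := module) h2

/-- A projection whose range contains the unit vector `e` is either the corresponding rank-one
projection or has another unit vector of its range orthogonal to `e`. -/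
lemma exists_orthogonal_fixed {P : selfAdjoint (H →L[ℂ] H)}
    (hP : ∀ v, (P : H →L[ℂ] H) ((P : H →L[ℂ] H) v) = (P : H →L[ℂ] H) v) {e : H} (he : ‖e‖ = 1)
    (hPe : (P : H →L[ℂ] H) e = e) (hne : P ≠ rankOneSA e) :
    ∃ f : H, f ≠ 0 ∧ inner ℂ e f = 0 ∧ (P : H →L[ℂ] H) f = f := by
  by_contra! h
  apply hne
  ext v
  rw [rankOneSA_apply]
  by_contra hv
  refine h ((P : H →L[ℂ] H) v - inner ℂ e v • e) (sub_ne_zero.2 hv) ?_ ?_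
  · rw [inner_sub_right, ← selfAdjoint_inner, hPe, inner_smul_right, inner_self_eq_ofReal, he]
    simp
  · rw [map_sub, map_smul, hP, hPe]

lemma exists_unit_fixed {P : selfAdjoint (H →L[ℂ] H)}
    (hP : ∀ v, (P : H →L[ℂ] H) ((P : H →L[ℂ] H) v) = (P : H →L[ℂ] H) v) (hne : P ≠ 0) :
    ∃ e : H, ‖e‖ = 1 ∧ (P : H →L[ℂ] H) e = e := by
  obtain ⟨v, hv⟩ : ∃ v, (P : H →L[ℂ] H) v ≠ 0 := by
    by_contra! h
    exact hne (by ext v; simp [h v])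
  refine ⟨((‖(P : H →L[ℂ] H) v‖⁻¹ : ℝ) : ℂ) • (P : H →L[ℂ] H) v, ?_, ?_⟩
  · rw [norm_smul, Complex.norm_real, norm_inv, norm_norm, inv_mul_cancel₀ (norm_ne_zero_iff.2 hv)]
  · rw [map_smul, hP]

lemma RankOneTypeC.exists_rankOneSA {A : selfAdjoint (H →L[ℂ] H)} (hA : RankOneTypeC A) :
    ∃ x : H, ‖x‖ = 1 ∧ ∀ C, CommC A C ↔ CommC (rankOneSA x) C := by
  obtain ⟨P, s, r, hs, hP, hAP⟩ := hA.1.exists_projection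
  have hcomm := commC_iff_of_affine hs hAP
  have hPR := (rankOneTypeC_congr hcomm).1 hA
  suffices h : ∃ x : H, ‖x‖ = 1 ∧ (P = rankOneSA x ∨ 1 - P = rankOneSA x) by
    obtain ⟨x, hx, rfl | h⟩ := h
    · exact ⟨x, hx, hcomm⟩
    · refine ⟨x, hx, fun C => (hcomm C).trans ?_⟩
      rw [← h]
      refine (commC_iff_of_affine (s := -1) (r := 1) (by norm_num) (fun v => ?_) C).symm
      simp only [AddSubgroup.coe_sub, selfAdjoint.val_one, sub_apply,
        one_apply_eq_self]
      push_cast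
      module
  have hP0 : P ≠ 0 := fun h => hPR.1.1 fun C => commC_iff.2 fun v => by simp [h]
  have hP1 : 1 - P ≠ 0 := fun h => hPR.1.1 fun C => commC_iff.2 fun v => by
    rw [← sub_eq_zero.1 h]; simp
  have hP' : ∀ v, ((1 - P : selfAdjoint (H →L[ℂ] H)) : H →L[ℂ] H)
      (((1 - P : selfAdjoint (H →L[ℂ] H)) : H →L[ℂ] H) v)
      = ((1 - P : selfAdjoint (H →L[ℂ] H)) : H →L[ℂ] H) v := fun v => by simp [hP]
  obtain ⟨e₁, he₁, hPe₁⟩ := exists_unit_fixed hP hP0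
  obtain ⟨e₃, he₃, hPe₃⟩ := exists_unit_fixed hP' hP1
  by_contra! hcon
  obtain ⟨e₂, he₂, he₁₂, hPe₂⟩ := exists_orthogonal_fixed hP he₁ hPe₁ (hcon e₁ he₁).1
  obtain ⟨e₄, he₄, he₃₄, hPe₄⟩ := exists_orthogonal_fixed hP' he₃ hPe₃ (hcon e₃ he₃).2
  replace hPe₃ : (P : H →L[ℂ] H) e₃ = 0 := by simpa using hPe₃
  replace hPe₄ : (P : H →L[ℂ] H) e₄ = 0 := by simpa using hPe₄
  have hker : ∀ v w, (P : H →L[ℂ] H) v = v → (P : H →L[ℂ] H) w = 0 → inner ℂ v w = 0 := by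
    intro v w hv hw
    rw [← hv, selfAdjoint_inner, hw, inner_zero_right]
  have i11 : inner ℂ e₁ e₁ = 1 := by simp [he₁]
  have i33 : inner ℂ e₃ e₃ = 1 := by simp [he₃]
  have i13 := hker e₁ e₃ hPe₁ hPe₃
  have i14 := hker e₁ e₄ hPe₁ hPe₄
  have i23 := hker e₂ e₃ hPe₂ hPe₃
  have i31 := inner_eq_zero_symm.1 i13
  have n1 : e₁ ≠ 0 := fun h => by simp [h] at he₁
  have n3 : e₃ ≠ 0 := fun h => by simp [h] at he₃
  set B := rankOneSA e₁ + rankOneSA e₃ with hB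
  have hBv : ∀ v, (B : H →L[ℂ] H) v = inner ℂ e₁ v • e₁ + inner ℂ e₃ v • e₃ := fun v => rfl
  have hsep := not_commC_rankOneSA_add (A := B) (x := e₃) (z := e₄) (s := 1) (t := 0)
    one_ne_zero (by simp [hBv, i13, he₃]) (by simp [hBv, i14, he₃₄]) n3 he₄
  have hBmax : MaxCommC B := by
    refine maxCommC_of_projection (fun v => ?_) fun h => hsep (h _)
    simp only [hBv, inner_add_right, inner_smul_right, i11, i33, i13, i31]
    module
  have hPs : CommC P (rankOneSA (e₃ + e₄)) :=
    commC_rankOneSA_of_apply_eq_smul (l := 0) (by simp [hPe₃, hPe₄])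
  have hPB : CommC P B := commC_iff.2 fun v => by
    rw [hBv, hBv, map_add, map_smul, map_smul, hPe₁, hPe₃, ← selfAdjoint_inner,
      ← selfAdjoint_inner, hPe₁, hPe₃]
    simp
  refine hsep (hPR.2 B hPB hBmax (fun h => hsep (h _ hPs)) (rankOneSA e₁) ?_ ?_ _ hPs ?_)
  · intro C h1 h2
    have hPBv : ∀ v, (P : H →L[ℂ] H) ((B : H →L[ℂ] H) v) = (rankOneSA e₁ : H →L[ℂ] H) v := by
      intro v
      rw [hBv, map_add, map_smul, map_smul, hPe₁, hPe₃]
      simp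
    refine commC_iff.2 fun v => ?_
    rw [← hPBv, ← hPBv, commC_iff.1 h2, commC_iff.1 h1]
  · intro h
    refine not_commC_rankOneSA_add (A := rankOneSA e₁) (x := e₁) (z := e₂) (s := 1) (t := 0)
      one_ne_zero (by simp [he₁]) (by simp [he₁₂]) n1 he₂ (h _ ?_)
    exact commC_rankOneSA_of_apply_eq_smul (l := 1) (by simp [hPe₁, hPe₂])
  · exact commC_rankOneSA_of_apply_eq_smul (l := 0) (by simp [i13, i14])

/-- `H` contains a nonzero vector orthogonal to any two given ones. -/
def HasOrthogonal (H : Type*) [NormedAddCommGroup H] [InnerProductSpace ℂ H] : Prop :=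
  ∀ x z : H, ∃ u : H, u ≠ 0 ∧ inner ℂ x u = 0 ∧ inner ℂ z u = 0

lemma commC_rankOneSA_smul {a : ℂ} (ha : a ≠ 0) (x : H) (C : selfAdjoint (H →L[ℂ] H)) :
    CommC (rankOneSA (a • x)) C ↔ CommC (rankOneSA x) C := by
  refine commC_iff_of_affine (s := ‖a‖ ^ 2) (r := 0) (by simpa using ha) (fun v => ?_) C
  rw [rankOneSA_smul]; simp

lemma eq_smul_of_commC_rankOneSA_iff (hd : HasOrthogonal H) {x z : H} (hx : x ≠ 0) (hz : z ≠ 0)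
    (h : ∀ C, CommC (rankOneSA x) C ↔ CommC (rankOneSA z) C) : ∃ a : ℂ, z = a • x := by
  obtain ⟨l, hl⟩ := (commC_rankOneSA_iff hz).1 ((h (rankOneSA z)).2 rfl)
  rw [rankOneSA_apply] at hl
  by_cases hxz : inner ℂ x z = 0
  · exfalso
    obtain ⟨u, hu, hxu, hzu⟩ := hd x z
    refine not_commC_rankOneSA_add (A := rankOneSA x) (x := x) (z := u) (s := ‖x‖ ^ 2) (t := 0)
      (by simpa using hx) (by rw [rankOneSA_apply, inner_self_eq_ofReal]) (by simp [hxu]) hx hu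
      ((h _).2 (commC_rankOneSA_of_apply_eq_smul (l := 0) ?_))
    rw [rankOneSA_apply, inner_add_right, hzu, inner_eq_zero_symm.1 hxz]
    simp
  · have hl0 : (l : ℂ) ≠ 0 := by
      intro h0
      rw [h0, zero_smul] at hl
      exact (smul_ne_zero hxz hx) hl
    refine ⟨(l : ℂ)⁻¹ * inner ℂ x z, ?_⟩
    rw [mul_smul, hl, smul_smul, inv_mul_cancel₀ hl0, one_smul]

/-- Orthogonality of nonzero vectors in terms of commutation of rank-one operators. -/
lemma inner_eq_zero_iff_commC (hd : HasOrthogonal H) {x z : H} (hx : x ≠ 0) (hz : z ≠ 0) :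
    inner ℂ x z = 0 ↔ CommC (rankOneSA x) (rankOneSA z) ∧
      ¬ ∀ C, (CommC (rankOneSA x) C ↔ CommC (rankOneSA z) C) := by
  constructor
  · intro h
    refine ⟨commC_rankOneSA_of_apply_eq_smul (l := 0) (by simp [h]), fun hC => ?_⟩
    obtain ⟨a, rfl⟩ := eq_smul_of_commC_rankOneSA_iff hd hx hz hC
    rw [inner_smul_right] at h
    rcases mul_eq_zero.1 h with h1 | h1
    · exact hz (by rw [h1, zero_smul])
    · exact inner_self_ne_zero_complex hx h1
  · rintro ⟨h1, h2⟩
    by_contra hne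
    apply h2
    obtain ⟨l, hl⟩ := (commC_rankOneSA_iff hz).1 h1
    rw [rankOneSA_apply] at hl
    have hx' : x = ((inner ℂ x z)⁻¹ * (l : ℂ)) • z := by
      rw [mul_smul, ← hl, smul_smul, inv_mul_cancel₀ hne, one_smul]
    have ha : (inner ℂ x z)⁻¹ * (l : ℂ) ≠ 0 := fun h0 => hx (by rw [hx', h0, zero_smul])
    intro C
    conv_lhs => rw [hx']
    exact commC_rankOneSA_smul ha z C

lemma exists_affine_of_bicommC_rankOneSA {x : H} (hx : x ≠ 0) {D : selfAdjoint (H →L[ℂ] H)}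
    (hD : BicommC (rankOneSA x) D) :
    ∃ a c : ℝ, ∀ v, (D : H →L[ℂ] H) v
      = (a : ℂ) • (rankOneSA x : H →L[ℂ] H) v + (c : ℂ) • v := by
  have hn : ‖x‖ ≠ 0 := norm_ne_zero_iff.2 hx
  have ha : ((‖x‖⁻¹ : ℝ) : ℂ) ≠ 0 := by
    rw [Complex.ofReal_ne_zero]; exact inv_ne_zero hn
  have hu : ‖((‖x‖⁻¹ : ℝ) : ℂ) • x‖ = 1 := by
    rw [norm_smul, Complex.norm_real, norm_inv, norm_norm, inv_mul_cancel₀ hn]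
  obtain ⟨a, c, h⟩ := exists_affine_of_bicommC (rankOneSA_isIdempotent hu)
    (fun C hC => hD C ((commC_rankOneSA_smul ha x C).1 hC))
  refine ⟨a * ‖((‖x‖⁻¹ : ℝ) : ℂ)‖ ^ 2, c, fun v => ?_⟩
  rw [h, rankOneSA_smul, smul_apply, smul_smul]
  push_cast; rfl

/-- A map on rays induced by a commutativity preserving `φ`. -/
structure IsRayMap (φ : selfAdjoint (H →L[ℂ] H) → selfAdjoint (H →L[ℂ] H)) (y : H → H) :
    Prop where
  norm_map : ∀ x, ‖y x‖ = ‖x‖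
  commC_map : ∀ x C, CommC (φ (rankOneSA x)) C ↔ CommC (rankOneSA (y x)) C
  commC_iff : ∀ A B, CommC (φ A) (φ B) ↔ CommC A B
  surj : Function.Surjective φ

section

variable {φ : selfAdjoint (H →L[ℂ] H) → selfAdjoint (H →L[ℂ] H)}

lemma centralC_map_zero (hsurj : Function.Surjective φ)
    (hpres : ∀ A B C, CommC (A - B) C ↔ CommC (φ A - φ B) (φ C)) (X : selfAdjoint (H →L[ℂ] H)) :
    CommC X (φ 0) := by
  obtain ⟨A, rfl⟩ := hsurj X
  obtain ⟨B, hB⟩ := hsurj 0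
  have h := (hpres A B 0).1 (commC_iff.2 fun v => by simp)
  rwa [hB, sub_zero] at h

lemma commC_map_iff (hsurj : Function.Surjective φ)
    (hpres : ∀ A B C, CommC (A - B) C ↔ CommC (φ A - φ B) (φ C)) (A C : selfAdjoint (H →L[ℂ] H)) :
    CommC (φ A) (φ C) ↔ CommC A C := by
  have h := hpres A 0 C
  rw [sub_zero] at h
  rw [h, commC_iff, commC_iff]
  refine forall_congr' fun v => ?_
  have h0 := commC_iff.1 (centralC_map_zero hsurj hpres (φ C)) v
  simp only [AddSubgroup.coe_sub, sub_apply, map_sub, h0, sub_left_inj]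

lemma rankOneTypeC_rankOneSA (hd : HasOrthogonal H) {x : H} (hx : x ≠ 0) :
    RankOneTypeC (rankOneSA x) := by
  have hn : ‖x‖ ≠ 0 := norm_ne_zero_iff.2 hx
  have ha : ((‖x‖⁻¹ : ℝ) : ℂ) ≠ 0 := by
    rw [Complex.ofReal_ne_zero]; exact inv_ne_zero hn
  obtain ⟨u, hu, hxu, -⟩ := hd (((‖x‖⁻¹ : ℝ) : ℂ) • x) 0
  refine (rankOneTypeC_congr (commC_rankOneSA_smul ha x)).1
    (rankOneTypeC_rankOneSA_of_norm_eq_one ?_ hu hxu)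
  rw [norm_smul, Complex.norm_real, norm_inv, norm_norm, inv_mul_cancel₀ hn]

lemma exists_isRayMap (hd : HasOrthogonal H) (hsurj : Function.Surjective φ)
    (hpres : ∀ A B C, CommC (A - B) C ↔ CommC (φ A - φ B) (φ C)) : ∃ y, IsRayMap φ y := by
  have h : ∀ x : H, ∃ y : H, ‖y‖ = ‖x‖ ∧
      ∀ C, CommC (φ (rankOneSA x)) C ↔ CommC (rankOneSA y) C := by
    intro x
    by_cases hx : x = 0
    · have h0 : rankOneSA (0 : H) = 0 := by ext v; simp
      refine ⟨0, by simp [hx], fun C => ?_⟩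
      rw [hx, h0]
      exact ⟨fun _ => commC_iff.2 fun v => by simp,
        fun _ => (centralC_map_zero hsurj hpres C).symm⟩
    · have h1 := (rankOneTypeC_map_iff hsurj (commC_map_iff hsurj hpres) _).2
        (rankOneTypeC_rankOneSA hd hx)
      obtain ⟨y, hy, hyC⟩ := h1.exists_rankOneSA
      refine ⟨(‖x‖ : ℂ) • y, ?_, fun C => (hyC C).trans (commC_rankOneSA_smul ?_ y C).symm⟩
      · rw [norm_smul, Complex.norm_real, norm_norm, hy, mul_one]
      · simpa using hx
  choose y hy1 hy2 using h
  exact ⟨y, hy1, hy2, commC_map_iff hsurj hpres, hsurj⟩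

namespace IsRayMap

variable {y : H → H} (hy : IsRayMap φ y)
include hy

lemma ne_zero {x : H} (hx : x ≠ 0) : y x ≠ 0 := by
  rwa [← norm_ne_zero_iff, hy.norm_map, norm_ne_zero_iff]

lemma map_zero : y 0 = 0 := by
  rw [← norm_eq_zero, hy.norm_map, norm_zero]

lemma commC_rankOneSA_iff' (x : H) (C : selfAdjoint (H →L[ℂ] H)) :
    CommC (rankOneSA (y x)) (φ C) ↔ CommC (rankOneSA x) C := by
  rw [← hy.commC_map, hy.commC_iff]

lemma inner_eq_zero_iff (hd : HasOrthogonal H) (x z : H) :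
    inner ℂ (y x) (y z) = 0 ↔ inner ℂ x z = 0 := by
  by_cases hx : x = 0
  · simp [hx, hy.map_zero]
  by_cases hz : z = 0
  · simp [hz, hy.map_zero]
  rw [inner_eq_zero_iff_commC hd hx hz, inner_eq_zero_iff_commC hd (hy.ne_zero hx)
    (hy.ne_zero hz)]
  refine and_congr ?_ (not_congr ?_)
  · rw [← hy.commC_map, commC_comm, ← hy.commC_map, hy.commC_iff, commC_comm]
  · rw [hy.surj.forall]
    exact forall_congr' fun C => by
      rw [hy.commC_rankOneSA_iff', hy.commC_rankOneSA_iff']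

lemma map_smul (hd : HasOrthogonal H) (a : ℂ) (x : H) :
    ∃ b : ℂ, ‖b‖ = ‖a‖ ∧ y (a • x) = b • y x := by
  by_cases hx : x = 0
  · exact ⟨a, rfl, by simp [hx, hy.map_zero]⟩
  by_cases ha : a = 0
  · exact ⟨0, by simp [ha], by simp [ha, hy.map_zero]⟩
  obtain ⟨b, hb⟩ := eq_smul_of_commC_rankOneSA_iff hd (hy.ne_zero hx)
    (hy.ne_zero (smul_ne_zero ha hx)) (by
      rw [hy.surj.forall]
      intro C
      rw [hy.commC_rankOneSA_iff', hy.commC_rankOneSA_iff', commC_rankOneSA_smul ha])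
  refine ⟨b, ?_, hb⟩
  have h := congrArg norm hb
  rw [hy.norm_map, norm_smul, norm_smul, hy.norm_map] at h
  exact (mul_right_cancel₀ (norm_ne_zero_iff.2 hx) h).symm

lemma exists_eq_smul (hd : HasOrthogonal H) (n : H) : ∃ (x : H) (b : ℂ), n = b • y x := by
  by_cases hn : n = 0
  · exact ⟨0, 0, by simp [hn]⟩
  obtain ⟨A, hA⟩ := hy.surj (rankOneSA n)
  have h1 : RankOneTypeC A := by
    rw [← rankOneTypeC_map_iff hy.surj hy.commC_iff, hA]
    exact rankOneTypeC_rankOneSA hd hn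
  obtain ⟨x, hx, hxC⟩ := h1.exists_rankOneSA
  have hx0 : x ≠ 0 := fun h => by simp [h] at hx
  obtain ⟨b, hb⟩ := eq_smul_of_commC_rankOneSA_iff hd (hy.ne_zero hx0) hn (by
    rw [hy.surj.forall]
    intro C
    rw [hy.commC_rankOneSA_iff', ← hxC, ← hA, hy.commC_iff])
  exact ⟨x, b, hb⟩

/-- The ray map sends the plane spanned by orthogonal `x`, `z` into that spanned by their images. -/
lemma eq_combination (hd : HasOrthogonal H) {x z w : H} (hx : x ≠ 0) (hz : z ≠ 0)
    (hxz : inner ℂ x z = 0)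
    (hw : ∀ u, inner ℂ x u = 0 → inner ℂ z u = 0 → inner ℂ w u = 0) :
    y w = (inner ℂ (y x) (y w) / (‖x‖ ^ 2 : ℝ)) • y x
      + (inner ℂ (y z) (y w) / (‖z‖ ^ 2 : ℝ)) • y z := by
  have hxz' := (hy.inner_eq_zero_iff hd x z).2 hxz
  have hzx' := inner_eq_zero_symm.1 hxz'
  have ex : inner ℂ (y x) (y x) = ((‖x‖ ^ 2 : ℝ) : ℂ) := by
    rw [inner_self_eq_ofReal, hy.norm_map]
  have ez : inner ℂ (y z) (y z) = ((‖z‖ ^ 2 : ℝ) : ℂ) := by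
    rw [inner_self_eq_ofReal, hy.norm_map]
  have hx2 : ((‖x‖ ^ 2 : ℝ) : ℂ) ≠ 0 := by
    rw [Complex.ofReal_ne_zero]; exact pow_ne_zero 2 (norm_ne_zero_iff.2 hx)
  have hz2 : ((‖z‖ ^ 2 : ℝ) : ℂ) ≠ 0 := by
    rw [Complex.ofReal_ne_zero]; exact pow_ne_zero 2 (norm_ne_zero_iff.2 hz)
  set n := y w - ((inner ℂ (y x) (y w) / (‖x‖ ^ 2 : ℝ)) • y x
      + (inner ℂ (y z) (y w) / (‖z‖ ^ 2 : ℝ)) • y z) with hn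
  have nx : inner ℂ (y x) n = 0 := by
    rw [hn, inner_sub_right, inner_add_right, inner_smul_right, inner_smul_right, ex, hxz',
      div_mul_cancel₀ _ hx2]; ring
  have nz : inner ℂ (y z) n = 0 := by
    rw [hn, inner_sub_right, inner_add_right, inner_smul_right, inner_smul_right, ez, hzx',
      div_mul_cancel₀ _ hz2]; ring
  have nw : inner ℂ (y w) n = 0 := by
    obtain ⟨u, b, hu⟩ := hy.exists_eq_smul hd n
    rw [hu, inner_smul_right] at nx nz ⊢
    rcases mul_eq_zero.1 nx with h | h
    · rw [h, zero_mul]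
    rcases mul_eq_zero.1 nz with h' | h'
    · rw [h', zero_mul]
    rw [hy.inner_eq_zero_iff hd] at h h'
    rw [(hy.inner_eq_zero_iff hd w u).2 (hw u h h'), mul_zero]
  have nn : inner ℂ n n = 0 := by
    conv_lhs => lhs; rw [hn]
    rw [inner_sub_left, inner_add_left, inner_smul_left, inner_smul_left, nx, nz, nw]
    simp
  exact sub_eq_zero.1 (inner_self_eq_zero.1 nn)

end IsRayMap

end

/-- The class of an operator modulo scalar operators. -/
def modScalar : (H →L[ℂ] H) →ₗ[ℂ] ((H →L[ℂ] H) ⧸ Submodule.span ℂ {(1 : H →L[ℂ] H)}) :=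
  Submodule.mkQ _

lemma modScalar_eq_iff {X Y : H →L[ℂ] H} :
    modScalar X = modScalar Y ↔ ∃ r : ℂ, ∀ v, X v = Y v + r • v := by
  rw [modScalar, Submodule.mkQ_apply, Submodule.mkQ_apply, Submodule.Quotient.eq,
    Submodule.mem_span_singleton]
  refine exists_congr fun r => ⟨fun h v => ?_, fun h => ?_⟩
  · have := congrArg (fun T : H →L[ℂ] H => T v) h
    simp only [smul_apply, one_apply_eq_self, sub_apply] at this
    rw [this]; abel
  · ext v
    simp only [smul_apply, one_apply_eq_self, sub_apply, h v]
    abel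

lemma rankOneSA_zero : rankOneSA (0 : H) = 0 := by ext v; simp

lemma rankOneSA_rotation (z u : H) :
    rankOneSA ((3 / 5 : ℂ) • z + (4 / 5 : ℂ) • u) + rankOneSA ((4 / 5 : ℂ) • z - (3 / 5 : ℂ) • u)
      = rankOneSA z + rankOneSA u := by
  ext v
  simp only [AddSubgroup.coe_add, add_apply, rankOneSA_apply, inner_add_left,
    inner_sub_left, inner_smul_left, map_div₀, map_ofNat]
  module

/-- The additive group generated by the rank-one operators. -/
def rankOneSpan (H : Type*) [NormedAddCommGroup H] [InnerProductSpace ℂ H] [CompleteSpace H] :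
    AddSubgroup (selfAdjoint (H →L[ℂ] H)) :=
  AddSubgroup.closure (Set.range rankOneSA)

lemma rankOneSA_mem_rankOneSpan (x : H) : rankOneSA x ∈ rankOneSpan H :=
  AddSubgroup.subset_closure ⟨x, rfl⟩

/-- Residual scalars are detected on a vector killed by both rank-one operators. -/
lemma eq_zero_of_forall_apply_eq {X Y : H →L[ℂ] H} {r : ℂ} (h : ∀ v, X v = Y v + r • v) {u : H}
    (hu : u ≠ 0) (hX : X u = 0) (hY : Y u = 0) : r = 0 := by
  have := h u
  rw [hX, hY, zero_add] at this
  exact (smul_eq_zero.1 this.symm).resolve_right hu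

section

variable {φ : selfAdjoint (H →L[ℂ] H) → selfAdjoint (H →L[ℂ] H)}

lemma modScalar_map_zero (hsurj : Function.Surjective φ)
    (hpres : ∀ A B C, CommC (A - B) C ↔ CommC (φ A - φ B) (φ C)) :
    modScalar (φ 0 : H →L[ℂ] H) = 0 := by
  obtain ⟨r, hr⟩ := selfAdjoint_exists_smul_of_forall_eigenvector (φ 0) ⊤
    fun w _ => (centralC_map_zero hsurj hpres (rankOneSA w)).symm
  rw [← map_zero modScalar, modScalar_eq_iff]
  exact ⟨r, fun v => by simp [hr v trivial]⟩

namespace IsRayMap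

variable {y : H → H} (hy : IsRayMap φ y)
include hy

lemma exists_modScalar_sub_eq
    (hpres : ∀ A B C, CommC (A - B) C ↔ CommC (φ A - φ B) (φ C))
    (A : selfAdjoint (H →L[ℂ] H)) (x : H) :
    ∃ s : ℝ, modScalar (φ (A + rankOneSA x) : H →L[ℂ] H) - modScalar (φ A : H →L[ℂ] H)
      = (s : ℂ) • modScalar (rankOneSA (y x) : H →L[ℂ] H) := by
  by_cases hx : x = 0
  · exact ⟨0, by simp [hx, rankOneSA_zero]⟩
  have hbi : BicommC (rankOneSA (y x)) (φ (A + rankOneSA x) - φ A) := by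
    intro C hC
    obtain ⟨C, rfl⟩ := hy.surj C
    rw [hy.commC_rankOneSA_iff'] at hC
    rw [← hpres]
    simpa using hC
  obtain ⟨s, r, h⟩ := exists_affine_of_bicommC_rankOneSA (hy.ne_zero hx) hbi
  refine ⟨s, ?_⟩
  rw [← map_sub, ← _root_.map_smul, modScalar_eq_iff]
  exact ⟨r, h⟩

lemma eq_zero_of_smul_modScalar_eq (hd : HasOrthogonal H) {x z u : H} {s t : ℂ}
    (hux : inner ℂ u x = 0) (huz : inner ℂ u z ≠ 0)
    (h : s • modScalar (rankOneSA (y x) : H →L[ℂ] H)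
      = t • modScalar (rankOneSA (y z) : H →L[ℂ] H)) : t = 0 := by
  rw [← _root_.map_smul, ← _root_.map_smul, modScalar_eq_iff] at h
  obtain ⟨r, hr⟩ := h
  obtain ⟨w, hw, hxw, hzw⟩ := hd x z
  rw [← hy.inner_eq_zero_iff hd] at hux hxw hzw
  have h0 := eq_zero_of_forall_apply_eq hr (hy.ne_zero hw) (by simp [hxw]) (by simp [hzw])
  have h1 := hr (y u)
  have hzu : inner ℂ (y z) (y u) ≠ 0 := by
    rw [Ne, hy.inner_eq_zero_iff hd, inner_eq_zero_symm]
    exact huz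
  have hz : y z ≠ 0 := fun h => hzu (by rw [h, inner_zero_left])
  simp only [smul_apply, rankOneSA_apply, inner_eq_zero_symm.1 hux, h0, zero_smul, smul_zero,
    add_zero, smul_smul] at h1
  exact (mul_eq_zero.1 ((smul_eq_zero.1 h1.symm).resolve_right hz)).resolve_right hzu

lemma modScalar_map_add_add_of_inner (hd : HasOrthogonal H)
    (hpres : ∀ A B C, CommC (A - B) C ↔ CommC (φ A - φ B) (φ C))
    (A : selfAdjoint (H →L[ℂ] H)) {x z u : H} (hux : inner ℂ u x = 0) (huz : inner ℂ u z ≠ 0) :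
    modScalar (φ (A + rankOneSA z + rankOneSA x) : H →L[ℂ] H)
        - modScalar (φ (A + rankOneSA z) : H →L[ℂ] H)
      = modScalar (φ (A + rankOneSA x) : H →L[ℂ] H) - modScalar (φ A : H →L[ℂ] H) := by
  obtain ⟨s, hs⟩ := hy.exists_modScalar_sub_eq hpres (A + rankOneSA z) x
  obtain ⟨s', hs'⟩ := hy.exists_modScalar_sub_eq hpres A x
  obtain ⟨t, ht⟩ := hy.exists_modScalar_sub_eq hpres (A + rankOneSA x) z
  obtain ⟨t', ht'⟩ := hy.exists_modScalar_sub_eq hpres A z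
  rw [add_right_comm] at ht
  have h : ((s : ℂ) - s') • modScalar (rankOneSA (y x) : H →L[ℂ] H)
      = ((t : ℂ) - t') • modScalar (rankOneSA (y z) : H →L[ℂ] H) := by
    rw [sub_smul, sub_smul, ← hs, ← hs', ← ht, ← ht']; abel
  have h0 := hy.eq_zero_of_smul_modScalar_eq hd hux huz h
  rw [h0, zero_smul, sub_smul, ← hs, ← hs'] at h
  exact sub_eq_zero.1 h

lemma modScalar_map_add_add (hd : HasOrthogonal H)
    (hpres : ∀ A B C, CommC (A - B) C ↔ CommC (φ A - φ B) (φ C))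
    (A : selfAdjoint (H →L[ℂ] H)) (x z : H) :
    modScalar (φ (A + rankOneSA z + rankOneSA x) : H →L[ℂ] H)
        - modScalar (φ (A + rankOneSA z) : H →L[ℂ] H)
      = modScalar (φ (A + rankOneSA x) : H →L[ℂ] H) - modScalar (φ A : H →L[ℂ] H) := by
  obtain ⟨u, hu, hxu, hzu⟩ := hd x z
  rw [inner_eq_zero_symm] at hxu hzu
  have huu := inner_self_ne_zero_complex hu
  have h1 := hy.modScalar_map_add_add_of_inner hd hpres (A + rankOneSA z) hxu huu
  have h2 := hy.modScalar_map_add_add_of_inner hd hpres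
    (A + rankOneSA ((3 / 5 : ℂ) • z + (4 / 5 : ℂ) • u)) hxu
    (z := (4 / 5 : ℂ) • z - (3 / 5 : ℂ) • u) (by
      rw [inner_sub_right, inner_smul_right, inner_smul_right, hzu]
      simpa using hu)
  have h3 := hy.modScalar_map_add_add_of_inner hd hpres A hxu
    (z := (3 / 5 : ℂ) • z + (4 / 5 : ℂ) • u) (by
      rw [inner_add_right, inner_smul_right, inner_smul_right, hzu]
      simpa using hu)
  rw [add_assoc A, rankOneSA_rotation, ← add_assoc, h1, h3] at h2
  exact h2

lemma modScalar_map_add_add_of_mem (hd : HasOrthogonal H)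
    (hpres : ∀ A B C, CommC (A - B) C ↔ CommC (φ A - φ B) (φ C)) (x : H)
    {B : selfAdjoint (H →L[ℂ] H)} (hB : B ∈ rankOneSpan H) :
    ∀ A : selfAdjoint (H →L[ℂ] H), modScalar (φ (A + B + rankOneSA x) : H →L[ℂ] H)
        - modScalar (φ (A + B) : H →L[ℂ] H)
      = modScalar (φ (A + rankOneSA x) : H →L[ℂ] H) - modScalar (φ A : H →L[ℂ] H) := by
  induction hB using AddSubgroup.closure_induction with
  | mem B h =>
    obtain ⟨z, rfl⟩ := h
    exact fun A => hy.modScalar_map_add_add hd hpres A x z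
  | zero => simp
  | add B C _ _ hB hC => intro A; rw [← add_assoc, hC, hB]
  | neg B _ hB => intro A; have := hB (A + -B); rw [neg_add_cancel_right] at this; exact this.symm

/-- Modulo scalars, `φ` is additive on the group generated by rank-one operators. -/
lemma modScalar_map_add (hd : HasOrthogonal H)
    (hpres : ∀ A B C, CommC (A - B) C ↔ CommC (φ A - φ B) (φ C))
    {A B : selfAdjoint (H →L[ℂ] H)} (hA : A ∈ rankOneSpan H) (hB : B ∈ rankOneSpan H) :
    modScalar (φ (A + B) : H →L[ℂ] H)
      = modScalar (φ A : H →L[ℂ] H) + modScalar (φ B : H →L[ℂ] H) := by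
  have h0 := modScalar_map_zero hy.surj hpres
  have key : ∀ x, ∀ A ∈ rankOneSpan H, modScalar (φ (A + rankOneSA x) : H →L[ℂ] H)
      = modScalar (φ A : H →L[ℂ] H) + modScalar (φ (rankOneSA x) : H →L[ℂ] H) := by
    intro x A hA
    have h := hy.modScalar_map_add_add_of_mem hd hpres x hA 0
    rw [zero_add, zero_add, h0, sub_zero] at h
    rw [← h]; abel
  induction hB using AddSubgroup.closure_induction generalizing A with
  | mem B h =>
    obtain ⟨z, rfl⟩ := h
    exact key z A hA
  | zero => simp [h0]
  | add B C hB' hC' hB hC => rw [← add_assoc, hC (add_mem hA hB'), hB hA, hC hB', add_assoc]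
  | neg B hB' hB =>
    have h1 := hB (add_mem hA (neg_mem hB'))
    have h2 := hB (neg_mem hB')
    rw [neg_add_cancel_right] at h1
    rw [neg_add_cancel, h0] at h2
    rw [h1, add_assoc, add_comm (modScalar _) (modScalar (φ (-B) : H →L[ℂ] H)), ← h2, add_zero]

end IsRayMap

end

lemma eq_mul_of_add_of_nonneg {F : ℝ → ℝ} (hadd : ∀ s t, 0 < s → 0 < t → F (s + t) = F s + F t)
    (hpos : ∀ s, 0 < s → 0 ≤ F s) {s : ℝ} (hs : 0 < s) : F s = s * F 1 := by
  have hmul : ∀ (n : ℕ) (t : ℝ), 0 < t → F ((n + 1 : ℕ) * t) = (n + 1 : ℕ) * F t := by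
    intro n t ht
    induction n with
    | zero => simp
    | succ n ih =>
      have : ((n + 1 + 1 : ℕ) : ℝ) * t = (n + 1 : ℕ) * t + t := by push_cast; ring
      rw [this, hadd _ _ (by positivity) ht, ih]
      push_cast; ring
  have hmono : ∀ a b, 0 < a → a ≤ b → F a ≤ F b := by
    intro a b ha hab
    rcases hab.eq_or_lt with rfl | h
    · rfl
    · have := hadd a (b - a) ha (sub_pos.2 h)
      rw [add_sub_cancel] at this
      linarith [hpos (b - a) (sub_pos.2 h)]
  have hbound : ∀ n : ℕ, (n + 1 : ℕ) * |F s - s * F 1| ≤ F 1 := by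
    intro n
    have hn : (0 : ℝ) < (n + 1 : ℕ) * s := by positivity
    have h1 := hmul n s hs
    have hu : F ((n + 1 : ℕ) * s) ≤ (⌊(n + 1 : ℕ) * s⌋₊ + 1) * F 1 := by
      have h2 := hmul ⌊(n + 1 : ℕ) * s⌋₊ 1 one_pos
      rw [mul_one, Nat.cast_add_one] at h2
      rw [← h2]
      exact hmono _ _ hn (Nat.lt_floor_add_one _).le
    have hl : ⌊(n + 1 : ℕ) * s⌋₊ * F 1 ≤ F ((n + 1 : ℕ) * s) := by
      rcases Nat.eq_zero_or_eq_succ_pred ⌊(n + 1 : ℕ) * s⌋₊ with h0 | h0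
      · rw [h0]; simpa using hpos _ hn
      · have h2 := hmul (⌊(n + 1 : ℕ) * s⌋₊ - 1) 1 one_pos
        have h3 : ⌊(n + 1 : ℕ) * s⌋₊ - 1 + 1 = ⌊(n + 1 : ℕ) * s⌋₊ := h0.symm
        rw [h3, mul_one] at h2
        rw [← h2]
        refine hmono _ _ ?_ (Nat.floor_le hn.le)
        rw [Nat.cast_pos, ← h3]
        exact Nat.succ_pos _
    have hf1 := Nat.floor_le hn.le
    have hf2 := Nat.lt_floor_add_one ((n + 1 : ℕ) * s)
    have hF1 := hpos 1 one_pos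
    rw [← abs_of_pos (by positivity : (0 : ℝ) < (n + 1 : ℕ)), ← abs_mul, abs_le]
    rw [h1] at hu hl
    constructor <;> nlinarith
  by_contra hne
  have hd : 0 < |F s - s * F 1| := abs_pos.2 (sub_ne_zero.2 hne)
  obtain ⟨n, hn⟩ := exists_nat_gt (F 1 / |F s - s * F 1|)
  rw [div_lt_iff₀ hd] at hn
  have := hbound n
  push_cast at this
  nlinarith

lemma HasOrthogonal.exists_norm_eq (hd : HasOrthogonal H) (x z : H) {r : ℝ} (hr : 0 ≤ r) :
    ∃ u : H, ‖u‖ = r ∧ inner ℂ x u = 0 ∧ inner ℂ z u = 0 := by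
  obtain ⟨u, hu, hxu, hzu⟩ := hd x z
  refine ⟨((r / ‖u‖ : ℝ) : ℂ) • u, ?_, by rw [inner_smul_right, hxu, mul_zero],
    by rw [inner_smul_right, hzu, mul_zero]⟩
  rw [norm_smul, Complex.norm_real, norm_div, norm_norm, div_mul_cancel₀ _ (norm_ne_zero_iff.2 hu),
    Real.norm_of_nonneg hr]

section

variable {φ : selfAdjoint (H →L[ℂ] H) → selfAdjoint (H →L[ℂ] H)}

namespace IsRayMap

variable {y : H → H} (hy : IsRayMap φ y)
include hy

lemma modScalar_map_rankOneSA_ne_zero (hd : HasOrthogonal H) {x : H} (hx : x ≠ 0) :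
    modScalar (φ (rankOneSA x) : H →L[ℂ] H) ≠ 0 := by
  intro h
  rw [← _root_.map_zero modScalar, modScalar_eq_iff] at h
  obtain ⟨r, hr⟩ := h
  obtain ⟨u, hu, hxu, -⟩ := hd (y x) 0
  refine not_commC_rankOneSA_add (A := rankOneSA (y x)) (x := y x) (z := u) (s := ‖y x‖ ^ 2)
    (t := 0) (by simpa using hy.ne_zero hx) (by rw [rankOneSA_apply, inner_self_eq_ofReal])
    (by simp [hxu]) (hy.ne_zero hx) hu ((hy.commC_map x _).1 (_root_.commC_iff.2 fun v => ?_))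
  simp [hr]

/-- The parallelogram identity transported through the ray map. -/
lemma smul_rankOneSA_add (hd : HasOrthogonal H)
    (hpres : ∀ A B C, CommC (A - B) C ↔ CommC (φ A - φ B) (φ C)) {h : H → ℝ}
    (hh : ∀ x, modScalar (φ (rankOneSA x) : H →L[ℂ] H)
      = (h x : ℂ) • modScalar (rankOneSA (y x) : H →L[ℂ] H)) (x z v : H) :
    ((h (x + z) : ℂ) * inner ℂ (y (x + z)) v) • y (x + z)
        + ((h (x - z) : ℂ) * inner ℂ (y (x - z)) v) • y (x - z)
      = (2 * (h x : ℂ) * inner ℂ (y x) v) • y x + (2 * (h z : ℂ) * inner ℂ (y z) v) • y z := by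
  have h1 := congrArg (fun X => modScalar (φ X : H →L[ℂ] H)) (rankOneSA_add_add_sub x z)
  have hx := rankOneSA_mem_rankOneSpan x
  have hz := rankOneSA_mem_rankOneSpan z
  rw [hy.modScalar_map_add hd hpres (rankOneSA_mem_rankOneSpan _) (rankOneSA_mem_rankOneSpan _),
    hy.modScalar_map_add hd hpres (add_mem (add_mem hx hx) hz) hz,
    hy.modScalar_map_add hd hpres (add_mem hx hx) hz, hy.modScalar_map_add hd hpres hx hx,
    hh, hh, hh, hh] at h1
  simp only [← _root_.map_smul, ← map_add] at h1
  rw [modScalar_eq_iff] at h1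
  obtain ⟨r, hr⟩ := h1
  obtain ⟨u, hu, hxu, hzu⟩ := hd x z
  have h0 : ∀ w, inner ℂ w u = 0 → (rankOneSA (y w) : H →L[ℂ] H) (y u) = 0 := by
    intro w hw
    rw [← hy.inner_eq_zero_iff hd] at hw
    simp [hw]
  have hr0 := eq_zero_of_forall_apply_eq hr (hy.ne_zero hu)
    (by simp only [add_apply, smul_apply]
        rw [h0 _ (by rw [inner_add_left, hxu, hzu, add_zero]),
          h0 _ (by rw [inner_sub_left, hxu, hzu, sub_zero])]; simp)
    (by simp only [add_apply, smul_apply]; rw [h0 _ hxu, h0 _ hzu]; simp)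
  have h2 := hr v
  simp only [add_apply, smul_apply, rankOneSA_apply, hr0] at h2
  linear_combination (norm := module) h2

lemma norm_inner_sq_div_add (hd : HasOrthogonal H) {x z w : H} (hx : x ≠ 0) (hz : z ≠ 0)
    (hxz : inner ℂ x z = 0)
    (hw : ∀ u, inner ℂ x u = 0 → inner ℂ z u = 0 → inner ℂ w u = 0) :
    ‖inner ℂ (y x) (y w)‖ ^ 2 / ‖x‖ ^ 2 + ‖inner ℂ (y z) (y w)‖ ^ 2 / ‖z‖ ^ 2 = ‖w‖ ^ 2 := by
  have h := congrArg (inner ℂ (y w)) (hy.eq_combination hd hx hz hxz hw)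
  rw [inner_self_eq_ofReal, hy.norm_map, inner_add_right, inner_smul_right, inner_smul_right,
    ← inner_conj_symm (y w) (y x), ← inner_conj_symm (y w) (y z), div_mul_eq_mul_div,
    div_mul_eq_mul_div, Complex.mul_conj', Complex.mul_conj'] at h
  exact_mod_cast h.symm

lemma coeff_add_eq_of_norm_eq (hd : HasOrthogonal H) {h : H → ℝ}
    (hP : ∀ x z v, ((h (x + z) : ℂ) * inner ℂ (y (x + z)) v) • y (x + z)
        + ((h (x - z) : ℂ) * inner ℂ (y (x - z)) v) • y (x - z)
      = (2 * (h x : ℂ) * inner ℂ (y x) v) • y x + (2 * (h z : ℂ) * inner ℂ (y z) v) • y z)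
    {x z : H} (hx : x ≠ 0) (hxz : inner ℂ x z = 0) (hn : ‖x‖ = ‖z‖) : h (x + z) = h x := by
  have hzx := inner_eq_zero_symm.1 hxz
  have hx2 : ((‖x‖ ^ 2 : ℝ) : ℂ) ≠ 0 := by
    rw [Complex.ofReal_ne_zero]; exact pow_ne_zero 2 (norm_ne_zero_iff.2 hx)
  have e1 : inner ℂ (y (x - z)) (y (x + z)) = 0 := by
    rw [hy.inner_eq_zero_iff hd, inner_sub_left, inner_add_right, inner_add_right, hxz, hzx,
      inner_self_eq_ofReal, inner_self_eq_ofReal, hn]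
    ring
  have e2 : inner ℂ (y (x + z)) (y (x + z)) = 2 * ((‖x‖ ^ 2 : ℝ) : ℂ) := by
    rw [inner_self_eq_ofReal, hy.norm_map, ← inner_self_eq_ofReal, inner_add_right, inner_add_left,
      inner_add_left, hxz, hzx, inner_self_eq_ofReal, inner_self_eq_ofReal, hn]
    ring
  have e3 : inner ℂ (y x) (y (x + z)) ≠ 0 := by
    rw [Ne, hy.inner_eq_zero_iff hd, inner_add_right, hxz, add_zero]
    exact inner_self_ne_zero_complex hx
  have e4 : inner ℂ (y x) (y z) = 0 := (hy.inner_eq_zero_iff hd _ _).2 hxz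
  have h1 := congrArg (inner ℂ (y x)) (hP x z (y (x + z)))
  rw [e1, e2, inner_add_right, inner_add_right, inner_smul_right, inner_smul_right,
    inner_smul_right, inner_smul_right, e4, inner_self_eq_ofReal, hy.norm_map] at h1
  have h2 : ((h (x + z) : ℂ) - h x) * (2 * ((‖x‖ ^ 2 : ℝ) : ℂ) * inner ℂ (y x) (y (x + z))) = 0 := by
    linear_combination h1
  exact_mod_cast sub_eq_zero.1
    ((mul_eq_zero.1 h2).resolve_right (mul_ne_zero (mul_ne_zero two_ne_zero hx2) e3))

lemma coeff_eq_of_norm_eq (hd : HasOrthogonal H) {h : H → ℝ}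
    (hP : ∀ x z v, ((h (x + z) : ℂ) * inner ℂ (y (x + z)) v) • y (x + z)
        + ((h (x - z) : ℂ) * inner ℂ (y (x - z)) v) • y (x - z)
      = (2 * (h x : ℂ) * inner ℂ (y x) v) • y x + (2 * (h z : ℂ) * inner ℂ (y z) v) • y z)
    {x z : H} (hn : ‖x‖ = ‖z‖) : h x = h z := by
  by_cases hx : x = 0
  · have hz : z = 0 := by rwa [hx, norm_zero, eq_comm, norm_eq_zero] at hn
    rw [hx, hz]
  have hz : z ≠ 0 := by rwa [← norm_ne_zero_iff, ← hn, norm_ne_zero_iff]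
  obtain ⟨u, hu, hxu, hzu⟩ := hd.exists_norm_eq x z (norm_nonneg x)
  have hu0 : u ≠ 0 := by rwa [← norm_ne_zero_iff, hu, norm_ne_zero_iff]
  have key : ∀ w, w ≠ 0 → ‖w‖ = ‖u‖ → inner ℂ w u = 0 → h w = h u := fun w hw hwn hwu => by
    rw [← hy.coeff_add_eq_of_norm_eq hd hP hw hwu hwn, add_comm,
      hy.coeff_add_eq_of_norm_eq hd hP hu0 (inner_eq_zero_symm.1 hwu) hwn.symm]
  rw [key x hx hu.symm hxu, key z hz (hn ▸ hu.symm) hzu]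

lemma coeff_mul_eq (hd : HasOrthogonal H) {h : H → ℝ}
    (hP : ∀ x z v, ((h (x + z) : ℂ) * inner ℂ (y (x + z)) v) • y (x + z)
        + ((h (x - z) : ℂ) * inner ℂ (y (x - z)) v) • y (x - z)
      = (2 * (h x : ℂ) * inner ℂ (y x) v) • y x + (2 * (h z : ℂ) * inner ℂ (y z) v) • y z)
    {x z : H} (hxz : inner ℂ x z = 0) :
    h (x + z) * (‖inner ℂ (y x) (y (x + z))‖ ^ 2 + ‖inner ℂ (y x) (y (x - z))‖ ^ 2)
      = 2 * h x * (‖x‖ ^ 2) ^ 2 := by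
  have hs : h (x - z) = h (x + z) := by
    refine hy.coeff_eq_of_norm_eq hd hP ?_
    rw [← sq_eq_sq₀ (norm_nonneg _) (norm_nonneg _), @norm_sub_sq ℂ, @norm_add_sq ℂ, hxz]
    simp
  have e4 : inner ℂ (y z) (y x) = 0 :=
    (hy.inner_eq_zero_iff hd _ _).2 (inner_eq_zero_symm.1 hxz)
  have h1 := congrArg (inner ℂ (y x)) (hP x z (y x))
  rw [inner_add_right, inner_add_right, inner_smul_right, inner_smul_right,
    inner_smul_right, inner_smul_right, e4, inner_self_eq_ofReal, hy.norm_map, hs,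
    ← inner_conj_symm (y (x + z)) (y x), ← inner_conj_symm (y (x - z)) (y x), mul_assoc,
    Complex.conj_mul', mul_assoc, Complex.conj_mul'] at h1
  rw [← Complex.ofReal_inj]
  push_cast at h1 ⊢
  linear_combination h1

/-- On rank-one operators, `φ` is a constant multiple of the ray map modulo scalars. -/
lemma exists_const (hd : HasOrthogonal H)
    (hpres : ∀ A B C, CommC (A - B) C ↔ CommC (φ A - φ B) (φ C)) :
    ∃ c : ℝ, c ≠ 0 ∧ ∀ x, modScalar (φ (rankOneSA x) : H →L[ℂ] H)
      = (c : ℂ) • modScalar (rankOneSA (y x) : H →L[ℂ] H) := by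
  have h0 : ∀ x, ∃ s : ℝ, modScalar (φ (rankOneSA x) : H →L[ℂ] H)
      = (s : ℂ) • modScalar (rankOneSA (y x) : H →L[ℂ] H) := by
    intro x
    have := hy.exists_modScalar_sub_eq hpres 0 x
    rwa [modScalar_map_zero hy.surj hpres, sub_zero, zero_add] at this
  choose h hh using h0
  have hP := hy.smul_rankOneSA_add hd hpres hh
  have hne : ∀ x, x ≠ 0 → h x ≠ 0 := fun x hx hx0 =>
    hy.modScalar_map_rankOneSA_ne_zero hd hx (by rw [hh, hx0, Complex.ofReal_zero, zero_smul])
  obtain ⟨e, he, -, -⟩ := hd.exists_norm_eq 0 0 zero_le_one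
  set η : ℝ → ℝ := fun p => h ((√p : ℂ) • e) with hη
  have hnorm : ∀ p : ℝ, ‖(√p : ℂ) • e‖ = √p := fun p => by
    rw [norm_smul, he, mul_one, Complex.norm_real, Real.norm_of_nonneg (Real.sqrt_nonneg p)]
  have hval : ∀ x p, ‖x‖ ^ 2 = p → h x = η p := fun x p hp =>
    hy.coeff_eq_of_norm_eq hd hP (by rw [hnorm, ← hp, Real.sqrt_sq (norm_nonneg x)])
  have hpair : ∀ p q : ℝ, 0 < p → 0 < q →
      η (p + q) * (p + q) = η p * p + η q * q ∧ 0 ≤ η (p + q) * η p := by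
    intro p q hp hq
    obtain ⟨z, hz, hxz, -⟩ := hd.exists_norm_eq ((√p : ℂ) • e) 0 (Real.sqrt_nonneg q)
    set x := (√p : ℂ) • e
    have hx2 : ‖x‖ ^ 2 = p := by rw [hnorm, Real.sq_sqrt hp.le]
    have hz2 : ‖z‖ ^ 2 = q := by rw [hz, Real.sq_sqrt hq.le]
    have hzx := inner_eq_zero_symm.1 hxz
    have hx0 : x ≠ 0 := fun h0 => by rw [h0] at hx2; simp at hx2; exact hp.ne hx2
    have hz0 : z ≠ 0 := fun h0 => by rw [h0] at hz2; simp at hz2; exact hq.ne hz2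
    have ha2 : ‖x + z‖ ^ 2 = p + q := by rw [@norm_add_sq ℂ, hxz, hx2, hz2]; simp
    have hb2 : ‖x - z‖ ^ 2 = p + q := by rw [@norm_sub_sq ℂ, hxz, hx2, hz2]; simp
    have m1 := hy.coeff_mul_eq hd hP hxz
    have m2 := hy.coeff_mul_eq hd hP hzx
    have e1 := hy.norm_inner_sq_div_add hd hx0 hz0 hxz (w := x + z)
      fun u h1 h2 => by rw [inner_add_left, h1, h2, add_zero]
    have e2 := hy.norm_inner_sq_div_add hd hx0 hz0 hxz (w := x - z)
      fun u h1 h2 => by rw [inner_sub_left, h1, h2, sub_zero]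
    have hneg : ‖inner ℂ (y z) (y (z - x))‖ = ‖inner ℂ (y z) (y (x - z))‖ := by
      obtain ⟨b, hb, hb'⟩ := hy.map_smul hd (-1) (x - z)
      rw [← neg_sub, ← neg_one_smul ℂ, hb', inner_smul_right, norm_mul, hb, norm_neg, norm_one,
        one_mul]
    rw [add_comm z x, hneg, hz2, hval _ _ ha2, hval _ _ hz2] at m2
    rw [hx2, hval _ _ ha2, hval _ _ hx2] at m1
    rw [hx2, hz2, ha2] at e1
    rw [hx2, hz2, hb2] at e2
    field_simp at e1 e2
    refine ⟨mul_left_cancel₀ (by positivity : 2 * p * q ≠ 0) ?_,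
      (mul_nonneg_iff_of_pos_left (by positivity : 0 < 2 * p ^ 2)).1 ?_⟩
    · linear_combination q * m1 + p * m2 - η (p + q) * e1 - η (p + q) * e2
    · have : 2 * p ^ 2 * (η (p + q) * η p) = η (p + q) ^ 2 *
          (‖inner ℂ (y x) (y (x + z))‖ ^ 2 + ‖inner ℂ (y x) (y (x - z))‖ ^ 2) := by
        linear_combination -η (p + q) * m1
      rw [this]; positivity
  have hη0 : ∀ p, 0 < p → η p ≠ 0 := fun p hp => hne _ (by
    rw [← norm_ne_zero_iff, hnorm]; exact (Real.sqrt_pos.2 hp).ne')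
  have hsign : ∀ s, 0 < s → 0 ≤ η s * η 1 := by
    intro s hs
    have h1 := (hpair s 1 hs one_pos).2
    have h2 := (hpair 1 s one_pos hs).2
    rw [add_comm] at h2
    have h3 : 0 < η (s + 1) ^ 2 := by have := hη0 (s + 1) (by positivity); positivity
    refine (mul_nonneg_iff_of_pos_left h3).1 ?_
    have := mul_nonneg h1 h2
    linear_combination this
  have hlin : ∀ s, 0 < s → η s = η 1 := by
    intro s hs
    have h1 := eq_mul_of_add_of_nonneg (F := fun s => η s * s * η 1)
      (fun s t hs ht => by rw [(hpair s t hs ht).1]; ring)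
      (fun s hs => by nlinarith [mul_nonneg hs.le (hsign s hs)]) hs
    refine mul_right_cancel₀ (mul_ne_zero hs.ne' (hη0 1 one_pos)) ?_
    linear_combination h1
  refine ⟨η 1, hη0 1 one_pos, fun x => ?_⟩
  by_cases hx : x = 0
  · rw [hh, hx, hy.map_zero, rankOneSA_zero]; simp
  · rw [hh, hval x _ rfl, hlin _ (pow_pos (norm_pos_iff.2 hx) 2)]

end IsRayMap

end

lemma rankOneSA_eq_of_eq_smul {m n : H} {b : ℂ} (h : n = b • m) (hn : ‖n‖ = ‖m‖) :
    rankOneSA n = rankOneSA m := by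
  by_cases hm : m = 0
  · rw [h, hm, smul_zero]
  rw [h, norm_smul] at hn
  have hb : ‖b‖ = 1 := mul_right_cancel₀ (norm_ne_zero_iff.2 hm) (by rw [hn, one_mul])
  rw [h, rankOneSA_smul_of_norm_eq_one hb]

lemma rankOneSA_add_add_add (e x z : H) :
    rankOneSA (e + (x + z)) + rankOneSA e + rankOneSA x + rankOneSA z
      = rankOneSA (e + x) + rankOneSA (e + z) + rankOneSA (x + z) := by
  ext v
  simp only [AddSubgroup.coe_add, add_apply, rankOneSA_apply, inner_add_left]
  module

/-- The component orthogonal to `y e` of the representative of `y (e + x)` whose inner product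
with `y e` is positive. -/
def orthogonalLift (y : H → H) (e x : H) : H := inner ℂ (y (e + x)) (y e) • y (e + x) - y e

section

variable {φ : selfAdjoint (H →L[ℂ] H) → selfAdjoint (H →L[ℂ] H)}

namespace IsRayMap

variable {y : H → H} (hy : IsRayMap φ y)
include hy

/-- Transition probabilities are preserved. -/
lemma norm_inner_map_add (hd : HasOrthogonal H)
    (hpres : ∀ A B C, CommC (A - B) C ↔ CommC (φ A - φ B) (φ C)) {c : ℝ} (hc : c ≠ 0)
    (hh : ∀ x, modScalar (φ (rankOneSA x) : H →L[ℂ] H)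
      = (c : ℂ) • modScalar (rankOneSA (y x) : H →L[ℂ] H)) {x z : H} (hxz : inner ℂ x z = 0) :
    ‖inner ℂ (y x) (y (x + z))‖ = ‖x‖ ^ 2 := by
  by_cases hx : x = 0
  · simp [hx, hy.map_zero]
  by_cases hz : z = 0
  · rw [hz, add_zero, inner_self_eq_ofReal, hy.norm_map, Complex.norm_real,
      Real.norm_of_nonneg (by positivity)]
  have hXZ := (hy.inner_eq_zero_iff hd x z).2 hxz
  have hZX := inner_eq_zero_symm.1 hXZ
  have hP := hy.smul_rankOneSA_add hd hpres hh (x + z) z (y x)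
  have hP' := hy.smul_rankOneSA_add hd hpres hh (x + z) z (y z)
  have hcC : (c : ℂ) ≠ 0 := Complex.ofReal_ne_zero.2 hc
  simp only [add_sub_cancel_right, hZX, hXZ, mul_zero, zero_smul, add_zero] at hP hP'
  have hp : 0 < ‖x‖ ^ 2 := pow_pos (norm_pos_iff.2 hx) 2
  have hq : 0 < ‖z‖ ^ 2 := pow_pos (norm_pos_iff.2 hz) 2
  have h1 := congrArg (inner ℂ (y x)) hP
  have h2 := congrArg (inner ℂ (y z)) hP'
  have h3 := congrArg (inner ℂ (y z)) hP
  rw [inner_add_right, inner_smul_right, inner_smul_right, inner_smul_right,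
    inner_self_eq_ofReal, hy.norm_map, mul_assoc, ← inner_conj_symm (y (x + z + z)),
    Complex.conj_mul', mul_assoc (2 * (c : ℂ)), ← inner_conj_symm (y (x + z)) (y x),
    Complex.conj_mul'] at h1
  rw [inner_add_right, inner_smul_right, inner_smul_right, inner_smul_right,
    inner_self_eq_ofReal, hy.norm_map, mul_assoc, ← inner_conj_symm (y (x + z + z)),
    Complex.conj_mul', mul_assoc (2 * (c : ℂ)), ← inner_conj_symm (y (x + z)) (y z),
    Complex.conj_mul'] at h2
  rw [inner_add_right, inner_smul_right, inner_smul_right, inner_smul_right, hZX, mul_zero,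
    add_zero, mul_assoc, mul_comm 2 (c : ℂ), mul_assoc, mul_assoc] at h3
  have h3 := congrArg norm (mul_left_cancel₀ hcC h3)
  rw [norm_mul, norm_mul, norm_mul, norm_inner_symm _ (y x), norm_inner_symm _ (y x)] at h3
  have r1 : ‖inner ℂ (y x) (y (x + z + z))‖ ^ 2 + ‖x‖ ^ 2 * ‖x‖ ^ 2
      = 2 * ‖inner ℂ (y x) (y (x + z))‖ ^ 2 := by
    rw [← Complex.ofReal_inj]
    refine mul_left_cancel₀ hcC ?_
    push_cast at h1 ⊢
    linear_combination h1
  have r2 : ‖inner ℂ (y z) (y (x + z + z))‖ ^ 2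
      = 2 * ‖inner ℂ (y z) (y (x + z))‖ ^ 2 + 2 * (‖z‖ ^ 2 * ‖z‖ ^ 2) := by
    rw [← Complex.ofReal_inj]
    refine mul_left_cancel₀ hcC ?_
    push_cast at h2 ⊢
    linear_combination h2
  have r3 := hy.norm_inner_sq_div_add hd hx hz hxz (w := x + z)
    fun u h1 h2 => by rw [inner_add_left, h1, h2, add_zero]
  rw [@norm_add_sq ℂ, hxz] at r3
  simp only [_root_.map_zero, mul_zero, add_zero] at r3
  have h4 := congrArg (· ^ 2) h3
  simp only [mul_pow, Complex.norm_ofNat] at h4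
  rw [← sq_eq_sq₀ (norm_nonneg _) hp.le]
  generalize ‖inner ℂ (y x) (y (x + z))‖ ^ 2 = A at *
  generalize ‖inner ℂ (y z) (y (x + z))‖ ^ 2 = B at *
  generalize ‖x‖ ^ 2 = p at *
  generalize ‖z‖ ^ 2 = q at *
  rw [← eq_sub_iff_add_eq] at r1
  rw [r1, r2] at h4
  field_simp at r3
  have hfac : (2 * q ^ 2 + p * q) * (A - p ^ 2) = 0 := by
    linear_combination h4 / 2 + p * r3
  exact sub_eq_zero.1 ((mul_eq_zero.1 hfac).resolve_left (by positivity))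

lemma norm_inner_and_inner_orthogonalLift (hN : ∀ x z, inner ℂ x z = 0 → ‖inner ℂ (y x) (y (x + z))‖ = ‖x‖ ^ 2)
    {e x : H} (he : ‖e‖ = 1) (hex : inner ℂ e x = 0) :
    ‖inner ℂ (y (e + x)) (y e)‖ = 1 ∧ inner ℂ (y e) (orthogonalLift y e x) = 0 := by
  have h1 : ‖inner ℂ (y (e + x)) (y e)‖ = 1 := by rw [norm_inner_symm, hN _ _ hex, he, one_pow]
  refine ⟨h1, ?_⟩
  rw [orthogonalLift, inner_sub_right, inner_smul_right, inner_self_eq_ofReal, hy.norm_map, he,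
    ← inner_conj_symm (y e), Complex.mul_conj', h1]
  simp

lemma norm_orthogonalLift
    (hN : ∀ x z, inner ℂ x z = 0 → ‖inner ℂ (y x) (y (x + z))‖ = ‖x‖ ^ 2)
    {e x : H} (he : ‖e‖ = 1) (hex : inner ℂ e x = 0) : ‖orthogonalLift y e x‖ = ‖x‖ := by
  obtain ⟨h1, h2⟩ := hy.norm_inner_and_inner_orthogonalLift hN he hex
  have h3 : ‖y e + orthogonalLift y e x‖ = ‖e + x‖ := by
    rw [orthogonalLift, add_sub_cancel, norm_smul, h1, one_mul, hy.norm_map]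
  have h4 := congrArg (· ^ 2) h3
  simp only [@norm_add_sq ℂ, h2, hex, hy.norm_map] at h4
  rw [← sq_eq_sq₀ (norm_nonneg _) (norm_nonneg _)]
  linear_combination h4

lemma exists_orthogonalLift_eq_smul (hd : HasOrthogonal H)
    (hN : ∀ x z, inner ℂ x z = 0 → ‖inner ℂ (y x) (y (x + z))‖ = ‖x‖ ^ 2)
    {e x : H} (he : ‖e‖ = 1) (hex : inner ℂ e x = 0) :
    ∃ b : ℂ, orthogonalLift y e x = b • y x := by
  by_cases hx : x = 0
  · refine ⟨0, ?_⟩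
    rw [zero_smul, ← norm_eq_zero, hy.norm_orthogonalLift hN he hex, hx, norm_zero]
  have he0 : e ≠ 0 := fun h => by simp [h] at he
  have h := hy.eq_combination hd he0 hx hex (w := e + x)
    fun u h1 h2 => by rw [inner_add_left, h1, h2, add_zero]
  obtain ⟨h1, -⟩ := hy.norm_inner_and_inner_orthogonalLift hN he hex
  refine ⟨inner ℂ (y (e + x)) (y e) * (inner ℂ (y x) (y (e + x)) / (‖x‖ ^ 2 : ℝ)), ?_⟩
  have h2 : inner ℂ (y (e + x)) (y e) * inner ℂ (y e) (y (e + x)) = 1 := by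
    rw [← inner_conj_symm (y e), Complex.mul_conj', h1]; simp
  rw [orthogonalLift]
  conv_lhs => lhs; rhs; rw [h]
  rw [he, one_pow, Complex.ofReal_one, div_one, smul_add, smul_smul, smul_smul, h2, one_smul,
    add_sub_cancel_left]

lemma orthogonalLift_add (hd : HasOrthogonal H)
    (hN : ∀ x z, inner ℂ x z = 0 → ‖inner ℂ (y x) (y (x + z))‖ = ‖x‖ ^ 2)
    (hpres : ∀ A B C, CommC (A - B) C ↔ CommC (φ A - φ B) (φ C)) {c : ℝ} (hc : c ≠ 0)
    (hh : ∀ x, modScalar (φ (rankOneSA x) : H →L[ℂ] H)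
      = (c : ℂ) • modScalar (rankOneSA (y x) : H →L[ℂ] H))
    {e x z : H} (he : ‖e‖ = 1) (hex : inner ℂ e x = 0) (hez : inner ℂ e z = 0) :
    orthogonalLift y e (x + z) = orthogonalLift y e x + orthogonalLift y e z := by
  have hexz : inner ℂ e (x + z) = 0 := by rw [inner_add_right, hex, hez, add_zero]
  have hcC : (c : ℂ) ≠ 0 := Complex.ofReal_ne_zero.2 hc
  have h1 := congrArg (fun X => modScalar (φ X : H →L[ℂ] H)) (rankOneSA_add_add_add e x z)
  have hm := fun x : H => rankOneSA_mem_rankOneSpan x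
  rw [hy.modScalar_map_add hd hpres (add_mem (add_mem (hm _) (hm _)) (hm _)) (hm _),
    hy.modScalar_map_add hd hpres (add_mem (hm _) (hm _)) (hm _),
    hy.modScalar_map_add hd hpres (hm _) (hm _),
    hy.modScalar_map_add hd hpres (add_mem (hm _) (hm _)) (hm _),
    hy.modScalar_map_add hd hpres (hm _) (hm _)] at h1
  simp only [hh, ← smul_add] at h1
  have h2 := smul_right_injective _ hcC h1
  simp only [← map_add] at h2
  rw [modScalar_eq_iff] at h2
  obtain ⟨r, hr⟩ := h2
  have hlift : ∀ w, inner ℂ e w = 0 → (rankOneSA (y (e + w)) : H →L[ℂ] H) (y e)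
      = y e + orthogonalLift y e w := fun w _ => by
    rw [orthogonalLift, rankOneSA_apply, add_sub_cancel]
  have hperp : ∀ w, inner ℂ e w = 0 → (rankOneSA (y w) : H →L[ℂ] H) (y e) = 0 := fun w hw => by
    rw [← hy.inner_eq_zero_iff hd, inner_eq_zero_symm] at hw
    rw [rankOneSA_apply, hw, zero_smul]
  have h3 := hr (y e)
  simp only [add_apply] at h3
  rw [hlift _ hexz, hlift _ hex, hlift _ hez, hperp _ hex, hperp _ hez, hperp _ hexz,
    rankOneSA_apply, inner_self_eq_ofReal, hy.norm_map, he] at h3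
  have h4 : orthogonalLift y e (x + z)
      = orthogonalLift y e x + orthogonalLift y e z + r • y e := by
    push_cast at h3
    linear_combination (norm := module) h3
  have h5 := congrArg (inner ℂ (y e)) h4
  rw [inner_add_right, inner_add_right, inner_smul_right, (hy.norm_inner_and_inner_orthogonalLift hN he hex).2,
    (hy.norm_inner_and_inner_orthogonalLift hN he hez).2, (hy.norm_inner_and_inner_orthogonalLift hN he hexz).2, inner_self_eq_ofReal,
    hy.norm_map, he] at h5
  have hr0 : r = 0 := by simpa using h5.symm
  rw [h4, hr0, zero_smul, add_zero]

end IsRayMap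

end

/-- The component of `w` orthogonal to the unit vector `e`. -/
def orthogonalPart (e : H) : H →ₗ[ℂ] H where
  toFun w := w - inner ℂ e w • e
  map_add' w w' := by rw [inner_add_right]; module
  map_smul' a w := by rw [inner_smul_right, RingHom.id_apply]; module

lemma orthogonalPart_apply (e w : H) : orthogonalPart e w = w - inner ℂ e w • e := rfl

lemma inner_orthogonalPart {e : H} (he : ‖e‖ = 1) (w : H) :
    inner ℂ e (orthogonalPart e w) = 0 := by
  rw [orthogonalPart_apply, inner_sub_right, inner_smul_right, inner_self_eq_ofReal, he]
  simp

lemma norm_sq_eq_add_orthogonalPart {e : H} (he : ‖e‖ = 1) (w : H) :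
    ‖w‖ ^ 2 = ‖inner ℂ e w‖ ^ 2 + ‖orthogonalPart e w‖ ^ 2 := by
  have h : w = inner ℂ e w • e + orthogonalPart e w := by rw [orthogonalPart_apply]; abel
  conv_lhs => rw [h]
  rw [@norm_add_sq ℂ, inner_smul_left, inner_orthogonalPart he, norm_smul, he]
  simp

/-- A norm-controlled additive map whose values at `w` and `i w` are proportional is linear or
conjugate-linear. -/
lemma forall_map_I_smul_eq {V : H → H} (hV : ∀ w z, V (w + z) = V w + V z)
    (hI : ∀ w, V (Complex.I • w) = Complex.I • V w ∨ V (Complex.I • w) = -Complex.I • V w) :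
    (∀ w, V (Complex.I • w) = Complex.I • V w) ∨ ∀ w, V (Complex.I • w) = -Complex.I • V w := by
  by_contra! h
  obtain ⟨⟨w, hw⟩, z, hz⟩ := h
  have hw' := (hI w).resolve_left hw
  have hz' := (hI z).resolve_right hz
  have h := hI (w + z)
  rw [smul_add, hV, hV] at h
  rcases h with h | h
  · exact hw (by rw [hz', smul_add] at h; exact add_right_cancel h)
  · exact hz (by rw [hw', smul_add] at h; exact add_left_cancel h)

lemma eq_I_or_eq_neg_I {l : ℂ} (h1 : ‖l‖ = 1) (h2 : ‖1 + l‖ ^ 2 = 2) :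
    l = Complex.I ∨ l = -Complex.I := by
  have h1' : ‖l‖ ^ 2 = 1 := by rw [h1, one_pow]
  rw [← Complex.normSq_eq_norm_sq, Complex.normSq_apply] at h1' h2
  simp only [Complex.add_re, Complex.one_re, Complex.add_im, Complex.one_im, zero_add] at h2
  have hre : l.re = 0 := by linarith
  rw [hre] at h1'
  have him : (l.im - 1) * (l.im + 1) = 0 := by linarith
  rcases mul_eq_zero.1 him with h | h
  · left; apply Complex.ext <;> simp [hre]; linarith
  · right; apply Complex.ext <;> simp [hre]; linarith

lemma map_real_smul_of_norm_le {V : H → H} (hV : ∀ w z, V (w + z) = V w + V z)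
    (hn : ∀ w, ‖V w‖ ≤ ‖w‖) (r : ℝ) (w : H) : V ((r : ℂ) • w) = (r : ℂ) • V w := by
  have hc : Continuous (AddMonoidHom.mk' V hV) :=
    AddMonoidHomClass.continuous_of_bound _ 1 (by simpa using hn)
  have := map_real_smul (AddMonoidHom.mk' V hV) hc r w
  rw [Complex.coe_smul, Complex.coe_smul]
  exact this

lemma map_smul_of_map_I_smul {V : H → H} (hV : ∀ w z, V (w + z) = V w + V z)
    (hn : ∀ w, ‖V w‖ ≤ ‖w‖) {σ : ℂ →+* ℂ} (hσ : ∀ r : ℝ, σ r = r)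
    (hI : ∀ w, V (Complex.I • w) = σ Complex.I • V w) (a : ℂ) (w : H) :
    V (a • w) = σ a • V w := by
  have h := map_real_smul_of_norm_le hV hn
  conv_lhs => rw [← Complex.re_add_im a, add_smul, mul_smul, hV, h, h, hI]
  conv_rhs => rw [← Complex.re_add_im a, map_add, map_mul, hσ, hσ]
  module

section

variable {φ : selfAdjoint (H →L[ℂ] H) → selfAdjoint (H →L[ℂ] H)}

namespace IsRayMap

variable {y : H → H} (hy : IsRayMap φ y)
include hy

/-- A semilinear isometry extending the orthogonal lift implements the ray map. -/
lemma exists_semilinear (hd : HasOrthogonal H) {e : H} (he : ‖e‖ = 1)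
    {σ : ℂ →+* ℂ} [RingHomInvPair σ σ] (hσ : ∀ a, ‖σ a‖ = ‖a‖)
    (hnorm : ∀ x, inner ℂ e x = 0 → ‖orthogonalLift y e x‖ = ‖x‖)
    (hperp : ∀ x, inner ℂ e x = 0 → inner ℂ (y e) (orthogonalLift y e x) = 0)
    (hpar : ∀ x, inner ℂ e x = 0 → ∃ b : ℂ, orthogonalLift y e x = b • y x)
    (hadd : ∀ w z, orthogonalLift y e (orthogonalPart e (w + z))
      = orthogonalLift y e (orthogonalPart e w) + orthogonalLift y e (orthogonalPart e z))
    (hsmul : ∀ (a : ℂ) w, orthogonalLift y e (orthogonalPart e (a • w))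
      = σ a • orthogonalLift y e (orthogonalPart e w)) :
    ∃ U : H ≃ₛₗᵢ[σ] H, ∀ w, rankOneSA (U w) = rankOneSA (y w) := by
  let L : H →ₛₗ[σ] H :=
    { toFun := fun w => σ (inner ℂ e w) • y e + orthogonalLift y e (orthogonalPart e w)
      map_add' := fun w z => by rw [inner_add_right, hadd, map_add]; module
      map_smul' := fun a w => by rw [inner_smul_right, hsmul, map_mul]; module }
  have hL : ∀ w, L w = σ (inner ℂ e w) • y e + orthogonalLift y e (orthogonalPart e w) :=
    fun w => rfl
  have hLnorm : ∀ w, ‖L w‖ = ‖w‖ := by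
    intro w
    have h0 := inner_orthogonalPart he w
    rw [← sq_eq_sq₀ (norm_nonneg _) (norm_nonneg _), norm_sq_eq_add_orthogonalPart he w, hL,
      @norm_add_sq ℂ, inner_smul_left, hperp _ h0, hnorm _ h0, norm_smul, hσ, hy.norm_map, he]
    simp
  have hLpar : ∀ w, ∃ b : ℂ, L w = b • y w := by
    intro w
    by_cases ht : inner ℂ e w = 0
    · have : orthogonalPart e w = w := by rw [orthogonalPart_apply, ht, zero_smul, sub_zero]
      obtain ⟨b, hb⟩ := hpar w ht
      exact ⟨b, by rw [hL, ht, _root_.map_zero, zero_smul, zero_add, this, hb]⟩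
    · set t : ℂ := inner ℂ e w with ht'
      have h1 : inner ℂ e (t⁻¹ • w) = 1 := by rw [inner_smul_right, ← ht', inv_mul_cancel₀ ht]
      have h2 : e + orthogonalPart e (t⁻¹ • w) = t⁻¹ • w := by
        rw [orthogonalPart_apply, h1, one_smul]; abel
      obtain ⟨b, -, hb⟩ := hy.map_smul hd t⁻¹ w
      refine ⟨σ t * inner ℂ (y (t⁻¹ • w)) (y e) * b, ?_⟩
      have h3 : w = t • t⁻¹ • w := by rw [smul_smul, mul_inv_cancel₀ ht, one_smul]
      conv_lhs => rw [h3]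
      rw [L.map_smulₛₗ, hL, h1, map_one, one_smul, orthogonalLift, h2, add_sub_cancel, mul_smul,
        mul_smul, hb]
  have hLsurj : Function.Surjective L := by
    intro n
    obtain ⟨x, b, hb⟩ := hy.exists_eq_smul hd n
    by_cases hx : x = 0
    · exact ⟨0, by rw [hb, hx, hy.map_zero, _root_.map_zero, smul_zero]⟩
    obtain ⟨b', hb'⟩ := hLpar x
    have hb0 : b' ≠ 0 := by
      intro h0
      have := hLnorm x
      rw [hb', h0, zero_smul, norm_zero, eq_comm, norm_eq_zero] at this
      exact hx this
    refine ⟨σ (b * b'⁻¹) • x, ?_⟩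
    rw [L.map_smulₛₗ, RingHomInvPair.comp_apply_eq, hb', smul_smul, mul_assoc,
      inv_mul_cancel₀ hb0, mul_one, hb]
  refine ⟨LinearIsometryEquiv.ofSurjective ⟨L, hLnorm⟩ hLsurj, fun w => ?_⟩
  obtain ⟨b, hb⟩ := hLpar w
  exact rankOneSA_eq_of_eq_smul (b := b) hb (by rw [hy.norm_map]; exact hLnorm w)

/-- Wigner's theorem for the ray map. -/
lemma exists_linear_or_conjugateLinear (hd : HasOrthogonal H)
    (hpres : ∀ A B C, CommC (A - B) C ↔ CommC (φ A - φ B) (φ C)) {c : ℝ} (hc : c ≠ 0)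
    (hh : ∀ x, modScalar (φ (rankOneSA x) : H →L[ℂ] H)
      = (c : ℂ) • modScalar (rankOneSA (y x) : H →L[ℂ] H)) :
    (∃ U : H ≃ₗᵢ[ℂ] H, ∀ w, rankOneSA (U w) = rankOneSA (y w)) ∨
      ∃ U : H ≃ₗᵢ⋆[ℂ] H, ∀ w, rankOneSA (U w) = rankOneSA (y w) := by
  obtain ⟨e, he, -, -⟩ := hd.exists_norm_eq 0 0 zero_le_one
  have hN : ∀ x z, inner ℂ x z = 0 → ‖inner ℂ (y x) (y (x + z))‖ = ‖x‖ ^ 2 :=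
    fun x z h => hy.norm_inner_map_add hd hpres hc hh h
  have hnorm := fun x (hx : inner ℂ e x = 0) => hy.norm_orthogonalLift hN he hx
  have hperp := fun x (hx : inner ℂ e x = 0) =>
    (hy.norm_inner_and_inner_orthogonalLift hN he hx).2
  have hpar := fun x (hx : inner ℂ e x = 0) => hy.exists_orthogonalLift_eq_smul hd hN he hx
  have hp := inner_orthogonalPart he
  set V : H → H := fun w => orthogonalLift y e (orthogonalPart e w) with hV
  have hadd : ∀ w z, V (w + z) = V w + V z := fun w z => by
    simp only [hV, map_add]
    exact hy.orthogonalLift_add hd hN hpres hc hh he (hp w) (hp z)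
  have hVnorm : ∀ w, ‖V w‖ = ‖orthogonalPart e w‖ := fun w => hnorm _ (hp w)
  have hle : ∀ w, ‖V w‖ ≤ ‖w‖ := fun w => by
    rw [hVnorm, ← sq_le_sq₀ (norm_nonneg _) (norm_nonneg _), norm_sq_eq_add_orthogonalPart he w]
    linarith [sq_nonneg ‖inner ℂ e w‖]
  have hI : ∀ w, V (Complex.I • w) = Complex.I • V w ∨ V (Complex.I • w) = -Complex.I • V w := by
    intro w
    have hVI : ‖V (Complex.I • w)‖ = ‖V w‖ := by
      rw [hVnorm, hVnorm, _root_.map_smul, norm_smul, Complex.norm_I, one_mul]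
    by_cases hw : V w = 0
    · left
      rwa [hw, smul_zero, ← norm_eq_zero, hVI, norm_eq_zero]
    obtain ⟨b, hb⟩ := hpar _ (hp w)
    obtain ⟨b', hb'⟩ := hpar _ (hp (Complex.I • w))
    rw [_root_.map_smul] at hb'
    obtain ⟨d, -, hd'⟩ := hy.map_smul hd Complex.I (orthogonalPart e w)
    have hb0 : b ≠ 0 := fun h0 => hw (by simp only [hV]; rw [hb, h0, zero_smul])
    obtain ⟨l, hl⟩ : ∃ l : ℂ, V (Complex.I • w) = l • V w := by
      refine ⟨b' * d * b⁻¹, ?_⟩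
      simp only [hV]
      rw [_root_.map_smul, hb', hb, hd', smul_smul, smul_smul, mul_assoc (b' * d),
        inv_mul_cancel₀ hb0, mul_one]
    have hw0 := norm_ne_zero_iff.2 hw
    have hl1 : ‖l‖ = 1 := by
      rw [hl, norm_smul] at hVI
      exact mul_right_cancel₀ hw0 (by rw [hVI, one_mul])
    have hl2 : ‖1 + l‖ ^ 2 = 2 := by
      have h1 : V (w + Complex.I • w) = (1 + l) • V w := by rw [hadd, hl, add_smul, one_smul]
      have h2 : w + Complex.I • w = (1 + Complex.I) • w := by rw [add_smul, one_smul]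
      have h3 := congrArg (fun v => ‖v‖ ^ 2) h1
      rw [hVnorm, h2, _root_.map_smul, norm_smul, norm_smul, ← hVnorm, mul_pow, mul_pow] at h3
      rw [← mul_right_cancel₀ (pow_ne_zero 2 hw0) h3, ← Complex.normSq_eq_norm_sq,
        Complex.normSq_apply]
      norm_num
    rw [hl]
    rcases eq_I_or_eq_neg_I hl1 hl2 with rfl | rfl
    · exact Or.inl rfl
    · exact Or.inr rfl
  rcases forall_map_I_smul_eq hadd hI with h | h
  · exact Or.inl (hy.exists_semilinear (σ := RingHom.id ℂ) hd he (fun a => rfl) hnorm hperp hpar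
      hadd (map_smul_of_map_I_smul hadd hle (fun r => rfl) h))
  · exact Or.inr (hy.exists_semilinear (σ := starRingEnd ℂ) hd he RCLike.norm_conj hnorm hperp
      hpar hadd (map_smul_of_map_I_smul hadd hle Complex.conj_ofReal
        fun w => by rw [h, Complex.conj_I]))

end IsRayMap

end

lemma rankOneSA_add_sub_sub_apply (x z v : H) :
    (rankOneSA (x + z) : H →L[ℂ] H) v - (rankOneSA x : H →L[ℂ] H) v - (rankOneSA z : H →L[ℂ] H) v
      = inner ℂ x v • z + inner ℂ z v • x := by
  simp only [rankOneSA_apply, inner_add_left]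
  module

/-- Semilinear isometries preserve reality of inner products. -/
lemma im_inner_map_eq_zero {σ : ℂ →+* ℂ} [RingHomInvPair σ σ]
    (hσI : σ Complex.I = Complex.I ∨ σ Complex.I = -Complex.I) (U : H ≃ₛₗᵢ[σ] H) {x z : H}
    (h : (inner ℂ x z).im = 0) : (inner ℂ (U x) (U z)).im = 0 := by
  have h1 : ‖x + Complex.I • z‖ ^ 2 = ‖x‖ ^ 2 + ‖z‖ ^ 2 := by
    rw [@norm_add_sq ℂ, inner_smul_right, norm_smul]
    simp [h]
  rw [← U.norm_map, map_add, U.map_smulₛₗ, ← U.norm_map x, ← U.norm_map z] at h1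
  rcases hσI with h2 | h2 <;>
  · rw [h2, @norm_add_sq ℂ, inner_smul_right, norm_smul] at h1
    simpa using h1

section

variable {φ : selfAdjoint (H →L[ℂ] H) → selfAdjoint (H →L[ℂ] H)}

namespace IsRayMap

variable {y : H → H} (hy : IsRayMap φ y)
include hy

lemma exists_map_apply_eq (hd : HasOrthogonal H)
    (hpres : ∀ A B C, CommC (A - B) C ↔ CommC (φ A - φ B) (φ C)) {c : ℝ}
    (hh : ∀ x, modScalar (φ (rankOneSA x) : H →L[ℂ] H)
      = (c : ℂ) • modScalar (rankOneSA (y x) : H →L[ℂ] H))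
    {σ : ℂ →+* ℂ} [RingHomInvPair σ σ]
    (hσI : σ Complex.I = Complex.I ∨ σ Complex.I = -Complex.I) {U : H ≃ₛₗᵢ[σ] H}
    (hU : ∀ w, rankOneSA (U w) = rankOneSA (y w)) (A : selfAdjoint (H →L[ℂ] H)) {x : H}
    (hx : ‖x‖ = 1) :
    ∃ m : ℝ, (φ A : H →L[ℂ] H) (U x) = (c : ℂ) • U ((A : H →L[ℂ] H) x) + (m : ℂ) • U x := by
  set a := (A : H →L[ℂ] H) x with ha
  have hxx : inner ℂ x x = 1 := by rw [inner_self_eq_ofReal, hx]; simp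
  have hXX : inner ℂ (U x) (U x) = 1 := by rw [inner_self_eq_ofReal, U.norm_map, hx]; simp
  have hX0 : U x ≠ 0 := fun h => by rw [h] at hXX; simp at hXX
  set B : selfAdjoint (H →L[ℂ] H) := rankOneSA (x + a) - rankOneSA x - rankOneSA a with hB
  have hcomm : CommC (A - B) (rankOneSA x) := by
    refine commC_rankOneSA_of_apply_eq_smul (l := -(inner ℂ x a).re) ?_
    rw [AddSubgroup.coe_sub, sub_apply, hB, AddSubgroup.coe_sub, AddSubgroup.coe_sub, sub_apply,
      sub_apply, rankOneSA_add_sub_sub_apply, hxx, Complex.ofReal_neg, ha,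
      selfAdjoint_inner_self_real, selfAdjoint_inner]
    module
  rw [hpres, commC_comm, hy.commC_map, ← hU, commC_comm, commC_rankOneSA_iff hX0] at hcomm
  obtain ⟨l, hl⟩ := hcomm
  have hm := fun x : H => rankOneSA_mem_rankOneSpan x
  have hBsum : rankOneSA (x + a) = B + (rankOneSA x + rankOneSA a) := by rw [hB]; abel
  have h1 := hy.modScalar_map_add hd hpres
    (show B ∈ rankOneSpan H from sub_mem (sub_mem (hm _) (hm _)) (hm _))
    (add_mem (hm x) (hm a))
  rw [← hBsum, hy.modScalar_map_add hd hpres (hm _) (hm _), hh, hh, hh, ← hU, ← hU, ← hU,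
    ← _root_.map_smul, ← _root_.map_smul, ← _root_.map_smul, ← map_add, ← map_add,
    modScalar_eq_iff] at h1
  obtain ⟨r, hr⟩ := h1
  have hr := hr (U x)
  have h2 := rankOneSA_add_sub_sub_apply (U x) (U a) (U x)
  rw [hXX, one_smul, ← map_add] at h2
  simp only [add_apply, smul_apply] at hr
  rw [AddSubgroup.coe_sub, sub_apply] at hl
  obtain ⟨m, hm⟩ : ∃ m : ℂ, (φ A : H →L[ℂ] H) (U x) = (c : ℂ) • U a + m • U x :=
    ⟨l - r + c * inner ℂ (U a) (U x), by
      linear_combination (norm := module) hl - hr + (c : ℂ) • h2⟩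
  have him : m.im = 0 := by
    have h3 := congrArg (fun v => (inner ℂ (U x) v).im) hm
    simp only [inner_add_right, inner_smul_right, hXX, mul_one] at h3
    rw [← selfAdjoint_inner_self_real, Complex.ofReal_im, Complex.add_im, Complex.im_ofReal_mul,
      im_inner_map_eq_zero hσI U (by rw [ha, ← selfAdjoint_inner_self_real, Complex.ofReal_im])]
      at h3
    linarith
  exact ⟨m.re, by rw [hm]; congr 2; exact Complex.ext rfl him⟩

lemma exists_scalar (hd : HasOrthogonal H)
    (hpres : ∀ A B C, CommC (A - B) C ↔ CommC (φ A - φ B) (φ C)) {c : ℝ}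
    (hh : ∀ x, modScalar (φ (rankOneSA x) : H →L[ℂ] H)
      = (c : ℂ) • modScalar (rankOneSA (y x) : H →L[ℂ] H))
    {σ : ℂ →+* ℂ} [RingHomInvPair σ σ]
    (hσI : σ Complex.I = Complex.I ∨ σ Complex.I = -Complex.I) {U : H ≃ₛₗᵢ[σ] H}
    (hU : ∀ w, rankOneSA (U w) = rankOneSA (y w)) (A : selfAdjoint (H →L[ℂ] H)) :
    ∃ g : ℝ, ∀ x, (φ A : H →L[ℂ] H) x
      = (c : ℂ) • U ((A : H →L[ℂ] H) (U.symm x)) + (g : ℂ) • x := by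
  set f : H → H := fun w => (φ A : H →L[ℂ] H) w - (c : ℂ) • U ((A : H →L[ℂ] H) (U.symm w)) with hf
  have hsmul : ∀ (a : ℂ) w, f (a • w) = a • f w := fun a w => by
    simp only [hf]
    rw [U.symm.map_smulₛₗ, _root_.map_smul, _root_.map_smul, U.map_smulₛₗ,
      RingHomInvPair.comp_apply_eq]
    module
  obtain ⟨g, hg⟩ := exists_smul_of_forall_eigenvector (f := f)
    (fun v w => by simp only [hf, map_add]; module) hsmul ⊤ (fun w _ => by
      by_cases hw : w = 0
      · exact ⟨0, by simp [hf, hw]⟩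
      have hn : (‖w‖ : ℂ) ≠ 0 := by simpa using hw
      obtain ⟨m, hm⟩ := hy.exists_map_apply_eq hd hpres hh hσI hU A
        (x := U.symm ((‖w‖ : ℂ)⁻¹ • w)) (by
          rw [U.symm.norm_map, norm_smul, norm_inv, Complex.norm_real, norm_norm,
            inv_mul_cancel₀ (norm_ne_zero_iff.2 hw)])
      rw [U.apply_symm_apply] at hm
      refine ⟨m, smul_right_injective H (inv_ne_zero hn) ?_⟩
      simp only
      rw [← hsmul, smul_comm]
      simp only [hf]
      rw [hm, add_sub_cancel_left])
  exact ⟨g, fun x => by rw [← hg x trivial]; simp only [hf]; abel⟩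

end IsRayMap

end

theorem stmt0
    (hdim : 3 ≤ Module.rank ℂ H)
    (φ : selfAdjoint (H →L[ℂ] H) → selfAdjoint (H →L[ℂ] H))
    (hsurj : Function.Surjective φ)
    (hpres : ∀ A B C : selfAdjoint (H →L[ℂ] H),
      CommC (A - B) C ↔ CommC (φ A - φ B) (φ C)) :
    ∃ c : ℝ, c ≠ 0 ∧ ∃ g : selfAdjoint (H →L[ℂ] H) → ℝ,
      ((∃ U : H ≃ₗᵢ[ℂ] H, ∀ (A : selfAdjoint (H →L[ℂ] H)) (x : H),
          (φ A : H →L[ℂ] H) x = (c : ℂ) • U ((A : H →L[ℂ] H) (U.symm x)) + (g A : ℂ) • x) ∨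
       (∃ U : H ≃ₗᵢ⋆[ℂ] H, ∀ (A : selfAdjoint (H →L[ℂ] H)) (x : H),
          (φ A : H →L[ℂ] H) x = (c : ℂ) • U ((A : H →L[ℂ] H) (U.symm x)) + (g A : ℂ) • x)) := by
  have hd : HasOrthogonal H := exists_orthogonal_of_three_le_rank hdim
  obtain ⟨y, hy⟩ := exists_isRayMap hd hsurj hpres
  obtain ⟨c, hc, hh⟩ := hy.exists_const hd hpres
  refine ⟨c, hc, ?_⟩
  rcases hy.exists_linear_or_conjugateLinear hd hpres hc hh with ⟨U, hU⟩ | ⟨U, hU⟩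
  · choose g hg using hy.exists_scalar hd hpres hh (Or.inl rfl) hU
    exact ⟨g, Or.inl ⟨U, hg⟩⟩
  · choose g hg using hy.exists_scalar hd hpres hh (Or.inr Complex.conj_I) hU
    exact ⟨g, Or.inr ⟨U, hg⟩⟩
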